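/- arXiv:1808.06330 — 2 statements merged into one kernel-verified Lean document; each statement's English description precedes it below -/
import Mathlib

section
/- Suppose r ≥ 2 and the bases b_1, …, b_r are multiplicatively independent, and suppose that the digit set D is such that every positive integer has a multi-base representation. Then there exists a positive real constant K_1 such that for every integer n > 2 there is a multi-base representation of n whose Hamming weight is at most K_1 · (log n)/(log log n). -/
/-!
Two of the bases, `p` and `q`, carry the argument; put `z = p * q`. A base-`z` expansion of `n`
costs `O(log n)` power-products. To save the factor `log log n`, blocks of `w` base-`z` digits,
with `w` a small multiple of `log log n`, are cleared from the right by `O(1)` terms each.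

The point is therefore that every residue class modulo `z ^ w` contains a sum of boundedly many
numbers `p ^ a * q ^ c`, up to a common factor `R` (`exists_step`). Group the primes dividing `z` by
the ratio of their valuations in `p` and `q`, so that `z = ∏ k, M k`. For each group there are
exponents with `p ^ V / q ^ U = A / B` where `A` and `B` are coprime to `M k`, and `A ≠ B` by
independence (`exists_splitting`). Lifting the exponent shows that the powers of `A / B` fill a coset
of bounded index modulo `M k ^ w`, so boundedly many of them sum to any prescribed residue
(`exists_sum_pow_eq`). Multiplying by suitable powers of the `A m`, `B m` for `m ≠ k` makes these
terms vanish modulo all `M a ^ w` with `a ≠ k` and keeps them coprime to `M k` (`edgeVal`).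
The Chinese remainder theorem then combines the groups.

Iterating (`exists_expansion`) writes `n / R` as a sum of such terms, at most `C` for each block, and
a last term `z ^ (w * s) * e` with `e` bounded. Here `R` and the bound for `e` are at most
exponential in `z ^ w`. The remaining contributions `n % R` and `z ^ (w * s) * (R * e)` have
`O(z ^ w)` base-`z` digits, and each digit is represented by means of the hypothesis on the digit
set (`HasDiagRepr`). The two kinds of power-products are never equal: in the first, the exponent of
`q` exceeds that of `p` by at least `z`, and in the second, the difference is less than `z`. The
weight is `O(log n / w + z ^ w)`, which is `O(log n / log log n)` when `z ^ w` is about `√(log n)`.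
-/

/-- `B` is a power-product of the bases `b 0, …, b (r-1)`. -/
def IsPowerProduct (r : ℕ) (b : Fin r → ℕ) (B : ℕ) : Prop :=
  ∃ α : Fin r → ℕ, B = ∏ j, b j ^ α j

/-- `d` is a multi-base representation of `n` with bases `b` and digit set `D`:
a finitely supported assignment of digits to power-products summing to `n`. -/
def IsMultiBaseRepr (r : ℕ) (b : Fin r → ℕ) (D : Finset ℕ) (n : ℕ) (d : ℕ →₀ ℕ) : Prop :=
  (∀ B, d B ∈ D) ∧ (∀ B ∈ d.support, IsPowerProduct r b B) ∧
    n = ∑ B ∈ d.support, d B * B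

/-- The bases `b 0, …, b (r-1)` are multiplicatively independent. -/
def MultIndep (r : ℕ) (b : Fin r → ℕ) : Prop :=
  ∀ α : Fin r → ℤ, (∏ j, (b j : ℝ) ^ α j) = 1 → α = 0

/-! ### Sums of powers of a fraction modulo powers -/

/-- A consequence of lifting the exponent at each prime of `M`: the order of `x / y` modulo `M ^ e`
is as large as the size of `x - y` permits. The square in `hxy` gives the divisibility by `4` that
the prime `2` requires. -/
lemma pow_dvd_sub_mul_of_pow_dvd_pow_sub {M : ℕ} {x y : ℤ} (hxy : ((M : ℤ)) ^ 2 ∣ x - y)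
    (hx : IsCoprime x (M : ℤ)) {e j : ℕ} (h : (M : ℤ) ^ e ∣ x ^ j - y ^ j) :
    (M : ℤ) ^ e ∣ (x - y) * j := by
  have key : M ^ e ∣ ((x - y) * j).natAbs := by
    rw [Nat.dvd_iff_prime_pow_dvd_dvd]
    intro l k hl hlk
    rcases Nat.eq_zero_or_pos k with rfl | hk
    · simp
    have hlM : l ∣ M := hl.dvd_of_dvd_pow ((dvd_pow_self l hk.ne').trans hlk)
    have hlM' : (l : ℤ) ∣ M := Int.natCast_dvd_natCast.2 hlM
    have hlx : ¬ (l : ℤ) ∣ x := fun hd =>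
      (Nat.prime_iff_prime_int.1 hl).not_isUnit (hx.isUnit_of_dvd' hd hlM')
    have hkd : (l : ℤ) ^ k ∣ x ^ j - y ^ j :=
      (by exact_mod_cast Int.natCast_dvd_natCast.2 hlk : (l : ℤ) ^ k ∣ (M : ℤ) ^ e).trans h
    have hem : emultiplicity (l : ℤ) (x ^ j - y ^ j) =
        emultiplicity (l : ℤ) (x - y) + emultiplicity (l : ℤ) (j : ℤ) := by
      rcases hl.eq_two_or_odd' with rfl | hodd
      · refine Int.two_pow_sub_pow' j ?_ hlx
        have : ((2 : ℕ) : ℤ) ^ 2 ∣ (M : ℤ) ^ 2 := pow_dvd_pow_of_dvd hlM' 2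
        exact (by norm_num at this ⊢; exact this : (4 : ℤ) ∣ (M : ℤ) ^ 2).trans hxy
      · rw [Int.natCast_emultiplicity]
        exact Int.emultiplicity_pow_sub_pow hl hodd
          ((hlM'.trans (dvd_pow_self _ two_ne_zero)).trans hxy) hlx j
    have : (l : ℤ) ^ k ∣ (x - y) * j := by
      rw [pow_dvd_iff_le_emultiplicity, emultiplicity_mul (Nat.prime_iff_prime_int.1 hl), ← hem]
      exact pow_dvd_iff_le_emultiplicity.1 hkd
    have := Int.natAbs_dvd_natAbs.2 this
    simpa [Int.natAbs_pow] using this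
  have := Int.natCast_dvd_natCast.2 key
  rw [Int.dvd_natAbs] at this
  exact_mod_cast this

/-- The powers of `x / y` fill the whole coset `1 + (x - y) (ZMod (M ^ e))`. They all lie in it, and
the exponent of the first repetition is at least its cardinality, by
`pow_dvd_sub_mul_of_pow_dvd_pow_sub`. -/
lemma exists_pow_eq_one_add {M : ℕ} (hM : 1 ≤ M) {x y : ℕ} (hne : x ≠ y)
    (hxy : ((M : ℤ)) ^ 2 ∣ (x : ℤ) - y) (hx : x.Coprime M) (hy : y.Coprime M) (e : ℕ) :
    ∀ t : ZMod (M ^ e), ∃ j < M ^ e,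
      ((x : ZMod (M ^ e)) * (y : ZMod (M ^ e))⁻¹) ^ j = 1 + ((x : ZMod (M ^ e)) - y) * t := by
  set Q := M ^ e with hQ
  have hQ0 : 0 < Q := pow_pos hM e
  have : NeZero Q := ⟨hQ0.ne'⟩
  have hyQ : y.Coprime Q := hy.pow_right e
  have hyu : (y : ZMod Q) * (y : ZMod Q)⁻¹ = 1 := ZMod.coe_mul_inv_eq_one y hyQ
  set h : ZMod Q := (x : ZMod Q) * (y : ZMod Q)⁻¹ with hh
  have hxh : (x : ZMod Q) = h * y := by rw [hh, mul_assoc, mul_comm _ (y : ZMod Q), hyu, mul_one]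
  set W : ℤ := (x : ℤ) - y with hW
  have hW0 : W ≠ 0 := by rw [hW, sub_ne_zero]; exact_mod_cast hne
  set G := Nat.gcd W.natAbs Q with hG
  have hG0 : 0 < G := Nat.gcd_pos_of_pos_right _ hQ0
  obtain ⟨J, hJ⟩ : G ∣ Q := Nat.gcd_dvd_right _ _
  have hJ0 : 0 < J := by
    rcases Nat.eq_zero_or_pos J with h0 | h0
    · rw [h0] at hJ; omega
    · exact h0
  -- `J` is the cardinality of the ideal generated by `x - y`, hence of the coset
  have hord : ∀ j : ℕ, h ^ j = 1 → J ∣ j := by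
    intro j hj
    have h1 : (x : ZMod Q) ^ j = (y : ZMod Q) ^ j := by rw [hxh, mul_pow, hj, one_mul]
    have h2 : (M : ℤ) ^ e ∣ (x : ℤ) ^ j - (y : ℤ) ^ j := by
      have : (((x : ℤ) ^ j - (y : ℤ) ^ j : ℤ) : ZMod Q) = 0 := by push_cast; rw [h1, sub_self]
      have := (ZMod.intCast_zmod_eq_zero_iff_dvd _ Q).1 this
      rw [hQ] at this; exact_mod_cast this
    have h3 := pow_dvd_sub_mul_of_pow_dvd_pow_sub hxy (Nat.isCoprime_iff_coprime.2 hx) h2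
    have h4 : Q ∣ W.natAbs * j := by
      have := Int.natAbs_dvd_natAbs.2 h3
      simpa [Int.natAbs_mul, Int.natAbs_pow, hQ] using this
    have h5 : G * J ∣ W.natAbs * j := hJ ▸ h4
    obtain ⟨w', hw'⟩ : G ∣ W.natAbs := Nat.gcd_dvd_left _ _
    have hc : Nat.Coprime J w' := by
      have := Nat.gcd_mul_left G w' J
      rw [← hw', ← hJ, ← hG] at this
      have : G * 1 = G * Nat.gcd w' J := by rw [mul_one]; exact this
      exact (Nat.Coprime.symm (Nat.eq_of_mul_eq_mul_left hG0 this).symm)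
    rw [hw', mul_assoc] at h5
    exact hc.dvd_of_dvd_mul_left (Nat.dvd_of_mul_dvd_mul_left hG0 h5)
  have hunit : IsUnit h := by
    have hxu : (x : ZMod Q) * (x : ZMod Q)⁻¹ = 1 := ZMod.coe_mul_inv_eq_one x (hx.pow_right e)
    exact IsUnit.of_mul_eq_one ((x : ZMod Q)⁻¹ * y) (by
      rw [hh]; linear_combination (hyu) * (x : ZMod Q) * (x : ZMod Q)⁻¹ + hxu)
  set S : Finset (ZMod Q) := (Finset.range J).image fun i => h ^ i with hS
  set T : Finset (ZMod Q) := (Finset.range J).image fun i => 1 + (G : ZMod Q) * (i : ℕ) with hT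
  have hinj : S.card = J := by
    rw [hS, Finset.card_image_of_injOn, Finset.card_range]
    have aux : ∀ i j : ℕ, i ≤ j → j < J → h ^ i = h ^ j → i = j := by
      intro i j hij hj heq
      have : h ^ (j - i) = 1 := by
        have h2 : h ^ i * h ^ (j - i) = h ^ i * 1 := by
          rw [← pow_add, Nat.add_sub_cancel' hij, mul_one, heq]
        exact (hunit.pow i).mul_left_cancel h2
      have := Nat.eq_zero_of_dvd_of_lt (hord _ this) (by omega)
      omega
    intro i hi j hj heq
    simp only [Finset.coe_range, Set.mem_Iio] at hi hj
    rcases le_total i j with hij | hij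
    · exact aux i j hij hj heq
    · exact (aux j i hij hi heq.symm).symm
  have hTmem : ∀ u : ZMod Q, 1 + (G : ZMod Q) * u ∈ T := by
    intro u
    rw [hT, Finset.mem_image]
    refine ⟨u.val % J, Finset.mem_range.2 (Nat.mod_lt _ hJ0), ?_⟩
    have h1 : (u.val : ZMod Q) = u := ZMod.natCast_zmod_val u
    have h2 : ((G * J : ℕ) : ZMod Q) = 0 := by rw [← hJ]; exact ZMod.natCast_self Q
    push_cast at h2
    have h3 : (u : ZMod Q) =
        ((u.val % J : ℕ) : ZMod Q) + (J : ZMod Q) * ((u.val / J : ℕ) : ZMod Q) := by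
      conv_lhs => rw [← h1, ← Nat.mod_add_div u.val J]
      push_cast; ring
    linear_combination (-(G : ZMod Q)) * h3 - ((u.val / J : ℕ) : ZMod Q) * h2
  have hWG : (G : ZMod Q) ∣ ((W : ℤ) : ZMod Q) := by
    have : (G : ℤ) ∣ W := Int.natCast_dvd.2 (Nat.gcd_dvd_left _ _)
    obtain ⟨c, hc⟩ := this
    exact ⟨(c : ZMod Q), by rw [hc]; push_cast; ring⟩
  have hST : S ⊆ T := by
    intro s hs
    rw [hS, Finset.mem_image] at hs
    obtain ⟨i, -, rfl⟩ := hs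
    have hd : ((W : ℤ) : ZMod Q) ∣ h - 1 := ⟨(y : ZMod Q)⁻¹, by
      rw [hW, hh]; push_cast; linear_combination hyu⟩
    have h1 : (G : ZMod Q) ∣ h ^ i - 1 := by
      have := sub_dvd_pow_sub_pow h 1 i
      rw [one_pow] at this
      exact (hWG.trans hd).trans this
    obtain ⟨u, hu⟩ := h1
    have := hTmem u
    rwa [← hu, add_sub_cancel] at this
  have hEq : S = T := Finset.eq_of_subset_of_card_le hST (by
    rw [hinj]; exact Finset.card_image_le.trans (by simp))
  obtain ⟨c, hc⟩ := hWG
  intro t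
  have hmem := hTmem (c * t)
  rw [← hEq, hS, Finset.mem_image] at hmem
  obtain ⟨j, hj, hjt⟩ := hmem
  refine ⟨j, (Finset.mem_range.1 hj).trans_le ((Nat.le_mul_of_pos_left J hG0).trans hJ.ge), ?_⟩
  rw [hjt, ← mul_assoc, ← hc, hW]; push_cast; ring

/-- Every residue modulo `M ^ w` is a sum of at most `C` distinct powers of `A / B`, with `C`
independent of `w`. Raising to the power `φ (M ^ 2)` puts `A / B` in the situation of
`exists_pow_eq_one_add`, whose coset has index bounded independently of `w`. The residue class is
corrected by copies of `1`, written as powers with distinct exponents, multiples of the period. -/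
lemma exists_sum_pow_eq {M : ℕ} (hM : 1 ≤ M) {A B : ℕ} (hne : A ≠ B)
    (hA : A.Coprime M) (hB : B.Coprime M) :
    ∃ C : ℕ, ∀ w : ℕ, ∀ y : ZMod (M ^ w), ∃ S : Finset ℕ,
      (∀ τ ∈ S, τ < C * M ^ w) ∧ S.card ≤ C ∧
      ∑ τ ∈ S, ((A : ZMod (M ^ w)) * (B : ZMod (M ^ w))⁻¹) ^ τ = y := by
  set d := Nat.totient (M ^ 2) with hd
  have hd0 : 0 < d := Nat.totient_pos.2 (pow_pos hM 2)
  have hxy : (M : ℤ) ^ 2 ∣ ((A ^ d : ℕ) : ℤ) - ((B ^ d : ℕ) : ℤ) := by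
    have h1 := (Nat.ModEq.pow_totient (hB.pow_right 2)).trans
      (Nat.ModEq.pow_totient (hA.pow_right 2)).symm
    exact_mod_cast (Nat.modEq_iff_dvd.1 h1)
  have hne' : A ^ d ≠ B ^ d := fun h => hne (Nat.pow_left_injective hd0.ne' h)
  set W : ℤ := ((A ^ d : ℕ) : ℤ) - ((B ^ d : ℕ) : ℤ) with hW
  have hW0 : W ≠ 0 := by rw [hW, sub_ne_zero]; exact_mod_cast hne'
  have hWpos : 0 < W.natAbs := Int.natAbs_pos.2 hW0
  refine ⟨d * W.natAbs, fun w => ?_⟩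
  set Q := M ^ w with hQ
  have hQ0 : 0 < Q := pow_pos hM w
  have : NeZero Q := ⟨hQ0.ne'⟩
  set g : ZMod Q := (A : ZMod Q) * (B : ZMod Q)⁻¹ with hg
  have hBu : (B : ZMod Q) * (B : ZMod Q)⁻¹ = 1 := ZMod.coe_mul_inv_eq_one B (hB.pow_right w)
  have hgd : ((A ^ d : ℕ) : ZMod Q) * ((B ^ d : ℕ) : ZMod Q)⁻¹ = g ^ d := by
    have h1 : ((B ^ d : ℕ) : ZMod Q) * ((B ^ d : ℕ) : ZMod Q)⁻¹ = 1 :=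
      ZMod.coe_mul_inv_eq_one _ ((hB.pow_right w).pow_left d)
    have h2 : (B : ZMod Q) ^ d * ((B : ZMod Q)⁻¹) ^ d = 1 := by rw [← mul_pow, hBu, one_pow]
    push_cast at h1 ⊢
    rw [hg, mul_pow]
    linear_combination (A : ZMod Q) ^ d * ((B : ZMod Q)⁻¹) ^ d * h1 -
      (A : ZMod Q) ^ d * ((B : ZMod Q) ^ d)⁻¹ * h2
  have hcov := fun t => exists_pow_eq_one_add hM hne' hxy (hA.pow_left d) (hB.pow_left d) w t
  rw [← hQ, hgd] at hcov
  have hperiod : (g ^ d) ^ Q = 1 := by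
    have h1 : (M : ZMod Q) ∣ g ^ d - 1 := by
      have h2 : ((M : ℤ) : ZMod Q) ^ 2 ∣ ((W : ℤ) : ZMod Q) := by
        have := map_dvd (Int.castRingHom (ZMod Q)) hxy
        simpa using this
      have h3 : ((W : ℤ) : ZMod Q) ∣ g ^ d - 1 := ⟨((B : ZMod Q)⁻¹) ^ d, by
        have h2 : (B : ZMod Q) ^ d * ((B : ZMod Q)⁻¹) ^ d = 1 := by rw [← mul_pow, hBu, one_pow]
        rw [hW, hg, mul_pow]; push_cast; linear_combination h2⟩
      have h4 : (M : ZMod Q) ∣ ((M : ℤ) : ZMod Q) ^ 2 := by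
        push_cast; exact dvd_pow_self _ two_ne_zero
      exact (h4.trans h2).trans h3
    have h5 := dvd_sub_pow_of_dvd_sub h1 w
    rw [← hQ, one_pow] at h5
    have h6 : (M : ZMod Q) ^ (w + 1) = 0 := by
      rw [pow_succ]
      have : ((M ^ w : ℕ) : ZMod Q) = 0 := by rw [← hQ]; exact ZMod.natCast_self Q
      push_cast at this
      rw [this, zero_mul]
    rw [h6, zero_dvd_iff, sub_eq_zero] at h5
    exact h5
  intro y
  -- `y = s + (1 + W * (Y / W))`, where the second summand lies in the coset
  set Y : ℤ := (y.val : ℤ) - 1 with hY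
  set s := (Y % W).natAbs with hs
  have hsW : s < W.natAbs := by
    have h1 := Int.emod_nonneg Y hW0
    have h2 := Int.emod_lt_abs Y hW0
    have h3 := Int.natCast_natAbs W
    omega
  have hsY : ((s : ℕ) : ℤ) = Y % W := Int.natAbs_of_nonneg (Int.emod_nonneg Y hW0)
  obtain ⟨j, hjQ, hj⟩ := hcov ((Y / W : ℤ) : ZMod Q)
  have hyj : y = (s : ZMod Q) + (g ^ d) ^ j := by
    have h1 : (((s : ℕ) : ℤ) + W * (Y / W) : ℤ) = (y.val : ℤ) - 1 := by
      rw [hsY, Int.emod_add_mul_ediv]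
    have h2 := congrArg (Int.cast : ℤ → ZMod Q) h1
    push_cast at h2
    rw [ZMod.natCast_zmod_val] at h2
    rw [hj]
    rw [hW] at h2 ⊢
    push_cast at h2 ⊢
    linear_combination -h2
  have hinj : Set.InjOn (fun i => d * (i * Q)) (Finset.range s : Set ℕ) := by
    intro a _ b _ hab
    have := Nat.eq_of_mul_eq_mul_left hd0 hab
    exact Nat.eq_of_mul_eq_mul_right hQ0 this
  have hnot : d * (s * Q + j) ∉ (Finset.range s).image fun i => d * (i * Q) := by
    rw [Finset.mem_image]
    rintro ⟨i, hi, hij⟩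
    have h1 := Nat.eq_of_mul_eq_mul_left hd0 hij
    have h2 : i * Q < s * Q := Nat.mul_lt_mul_of_pos_right (Finset.mem_range.1 hi) hQ0
    omega
  refine ⟨insert (d * (s * Q + j)) ((Finset.range s).image fun i => d * (i * Q)), ?_, ?_, ?_⟩
  · have hb : ∀ v, v < (s + 1) * Q → d * v < d * W.natAbs * Q := by
      intro v hv
      rw [mul_assoc]
      exact Nat.mul_lt_mul_of_pos_left (hv.trans_le (Nat.mul_le_mul_right Q hsW)) hd0
    intro τ hτ
    rw [Finset.mem_insert, Finset.mem_image] at hτ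
    rcases hτ with rfl | ⟨i, hi, rfl⟩
    · exact hb _ (by nlinarith)
    · have := Finset.mem_range.1 hi
      exact hb _ (Nat.mul_lt_mul_of_pos_right (by omega) hQ0)
  · refine (Finset.card_insert_le _ _).trans ?_
    have := (Finset.card_image_le (s := Finset.range s) (f := fun i => d * (i * Q)))
    rw [Finset.card_range] at this
    nlinarith
  · rw [Finset.sum_insert hnot, Finset.sum_image hinj]
    have h1 : ∀ i, g ^ (d * (i * Q)) = 1 := fun i => by
      rw [pow_mul, mul_comm i Q, pow_mul, hperiod, one_pow]
    have h2 : g ^ (d * (s * Q + j)) = (g ^ d) ^ j := by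
      rw [mul_add, pow_add, h1, one_mul, pow_mul]
    simp only [h1, h2, Finset.sum_const, Finset.card_range, nsmul_eq_mul, mul_one]
    rw [hyj]; ring

/-! ### Grouping the primes of `p * q` -/

/-- A factorization `p * q = ∏ k, M k` into pairwise coprime parts, one for each value `k` of the
ratio of the valuations of `p` and `q` at the primes dividing `p * q`. The exponents `V k`, `U k`
are such that `p ^ V k` and `q ^ U k` have the same valuation at all primes of `M k`. The fraction
`p ^ V k / q ^ U k` is written as `A k / B k` by cancelling `G k`. By `cross`, each other part `M a`
divides a power of one of `A k`, `B k` and is coprime to the other one. -/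
structure IsSplitting {ι : Type} [Fintype ι] (p q : ℕ) (M A B G U V : ι → ℕ) : Prop where
  prod_eq : ∏ k, M k = p * q
  one_lt : ∀ k, 1 < M k
  coprime : Pairwise (Function.onFun Nat.Coprime M)
  pow_p : ∀ k, p ^ V k = A k * G k
  pow_q : ∀ k, q ^ U k = B k * G k
  ne : ∀ k, A k ≠ B k
  coprime_A : ∀ k, (A k).Coprime (M k)
  coprime_B : ∀ k, (B k).Coprime (M k)
  cross : ∀ a k, a ≠ k → (M a ∣ A k ^ (p * q) ∧ (B k).Coprime (M a)) ∨
    (M a ∣ B k ^ (p * q) ∧ (A k).Coprime (M a))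

/-- Comparing the valuations at `l` of `p ^ V` and `q ^ U` tells whether `l` divides the numerator or
the denominator of `p ^ V / q ^ U` in lowest terms. -/
lemma factorization_compare {p q A B G U V l : ℕ} (hp : p ≠ 0) (hq : q ≠ 0) (hl : l.Prime)
    (hA : p ^ V = A * G) (hB : q ^ U = B * G) (hAB : A.Coprime B) :
    (V * p.factorization l = U * q.factorization l → ¬ l ∣ A ∧ ¬ l ∣ B) ∧
    (U * q.factorization l < V * p.factorization l → l ∣ A ∧ ¬ l ∣ B) ∧
    (V * p.factorization l < U * q.factorization l → l ∣ B ∧ ¬ l ∣ A) := by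
  have hA' : A * G ≠ 0 := hA ▸ pow_ne_zero V hp
  have hB' : B * G ≠ 0 := hB ▸ pow_ne_zero U hq
  have hA0 := left_ne_zero_of_mul hA'
  have hB0 := left_ne_zero_of_mul hB'
  have hG0 := right_ne_zero_of_mul hA'
  have h1 := congrArg (fun n => n.factorization l) hA
  have h2 := congrArg (fun n => n.factorization l) hB
  simp only [Nat.factorization_pow, Nat.factorization_mul hA0 hG0,
    Nat.factorization_mul hB0 hG0, Finsupp.smul_apply, Finsupp.add_apply, smul_eq_mul] at h1 h2
  have hnot : ¬ (l ∣ A ∧ l ∣ B) := fun h => Nat.not_coprime_of_dvd_of_dvd hl.one_lt h.1 h.2 hAB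
  rw [h1, h2]
  simp only [hl.dvd_iff_one_le_factorization hA0, hl.dvd_iff_one_le_factorization hB0] at hnot ⊢
  omega

/-- Multiplicative independence of `p` and `q` enters only through `A k ≠ B k`. -/
lemma exists_splitting {p q : ℕ} (hp : 1 < p) (hq : 1 < q)
    (hind : ∀ a b : ℕ, p ^ a = q ^ b → a = 0 ∧ b = 0) :
    ∃ (ι : Type) (_ : Fintype ι) (M A B G U V : ι → ℕ), IsSplitting p q M A B G U V := by
  have hp0 : p ≠ 0 := by omega
  have hq0 : q ≠ 0 := by omega
  have hz0 : p * q ≠ 0 := mul_ne_zero hp0 hq0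
  set u : ℕ → ℕ := fun l => p.factorization l with hu
  set v : ℕ → ℕ := fun l => q.factorization l with hv
  set P := (p * q).primeFactors with hP
  have huv : ∀ l, (p * q).factorization l = u l + v l := fun l => by
    rw [Nat.factorization_mul hp0 hq0]; rfl
  have hPpos : ∀ l ∈ P, 0 < u l + v l := fun l hl => by
    rw [← huv]
    exact (Nat.prime_of_mem_primeFactors hl).factorization_pos_of_dvd hz0
      (Nat.dvd_of_mem_primeFactors hl)
  -- primes are grouped by this ratio rather than `u l / v l`, as `v l` may vanish
  set key : ℕ → ℚ := fun l => (u l : ℚ) / ((u l + v l : ℕ) : ℚ) with hkey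
  set K := P.image key with hK
  have hrep : ∀ κ : {κ // κ ∈ K}, ∃ l ∈ P, key l = κ.1 := fun κ => Finset.mem_image.1 κ.2
  choose rep hrepP hrepk using hrep
  let M : {κ // κ ∈ K} → ℕ := fun κ => ∏ l ∈ P with key l = κ.1, l ^ (u l + v l)
  let U : {κ // κ ∈ K} → ℕ := fun κ => u (rep κ)
  let V : {κ // κ ∈ K} → ℕ := fun κ => v (rep κ)
  let G : {κ // κ ∈ K} → ℕ := fun κ => Nat.gcd (p ^ V κ) (q ^ U κ)
  let A : {κ // κ ∈ K} → ℕ := fun κ => p ^ V κ / G κ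
  let B : {κ // κ ∈ K} → ℕ := fun κ => q ^ U κ / G κ
  have hGpos : ∀ κ, 0 < G κ := fun κ => Nat.gcd_pos_of_pos_left _ (pow_pos (by omega) _)
  have hA : ∀ κ, p ^ V κ = A κ * G κ := fun κ => (Nat.div_mul_cancel (Nat.gcd_dvd_left _ _)).symm
  have hB : ∀ κ, q ^ U κ = B κ * G κ := fun κ => (Nat.div_mul_cancel (Nat.gcd_dvd_right _ _)).symm
  have hAB : ∀ κ, (A κ).Coprime (B κ) := fun κ => Nat.coprime_div_gcd_div_gcd (hGpos κ)
  have hA0 : ∀ κ, A κ ≠ 0 := fun κ => left_ne_zero_of_mul (hA κ ▸ pow_ne_zero _ hp0)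
  have hB0 : ∀ κ, B κ ≠ 0 := fun κ => left_ne_zero_of_mul (hB κ ▸ pow_ne_zero _ hq0)
  have hlt : ∀ l ∈ P, ∀ m ∈ P, key l < key m → v l * u m > u l * v m := by
    intro l hl m hm h
    have h1 : (0 : ℚ) < ((u l + v l : ℕ) : ℚ) := by exact_mod_cast hPpos l hl
    have h2 : (0 : ℚ) < ((u m + v m : ℕ) : ℚ) := by exact_mod_cast hPpos m hm
    simp only [hkey] at h
    rw [div_lt_div_iff₀ h1 h2] at h
    have h3 : u l * (u m + v m) < u m * (u l + v l) := by exact_mod_cast h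
    nlinarith
  have heq : ∀ l ∈ P, ∀ m ∈ P, key l = key m → v l * u m = u l * v m := by
    intro l hl m hm h
    have h1 : ((u l + v l : ℕ) : ℚ) ≠ 0 := by exact_mod_cast (hPpos l hl).ne'
    have h2 : ((u m + v m : ℕ) : ℚ) ≠ 0 := by exact_mod_cast (hPpos m hm).ne'
    simp only [hkey] at h
    rw [div_eq_div_iff h1 h2] at h
    have h3 : u l * (u m + v m) = u m * (u l + v l) := by exact_mod_cast h
    nlinarith
  have hcmp := fun κ l (hl : l ∈ P) =>
    factorization_compare hp0 hq0 (Nat.prime_of_mem_primeFactors hl) (hA κ) (hB κ) (hAB κ)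
  have hcop : ∀ (κ : {κ // κ ∈ K}) (n : ℕ), (∀ l ∈ P, key l = κ.1 → ¬ l ∣ n) → n.Coprime (M κ) := by
    intro κ n h
    refine Nat.Coprime.prod_right fun l hl => ?_
    rw [Finset.mem_filter] at hl
    exact ((Nat.Prime.coprime_iff_not_dvd (Nat.prime_of_mem_primeFactors hl.1)).2
      (h l hl.1 hl.2)).symm.pow_right _
  have hdvd : ∀ (κ : {κ // κ ∈ K}) (n : ℕ), (∀ l ∈ P, key l = κ.1 → l ∣ n) → M κ ∣ n ^ (p * q) := by
    intro κ n h
    refine Finset.prod_dvd_of_isRelPrime ?_ ?_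
    · intro l hl m hm hlm
      simp only [Finset.coe_filter, Set.mem_ofPred_eq] at hl hm
      refine Nat.coprime_iff_isRelPrime.1 (Nat.Coprime.pow _ _ ?_)
      exact (Nat.coprime_primes (Nat.prime_of_mem_primeFactors hl.1)
        (Nat.prime_of_mem_primeFactors hm.1)).2 hlm
    · intro l hl
      rw [Finset.mem_filter] at hl
      refine (pow_dvd_pow l ?_).trans (pow_dvd_pow_of_dvd (h l hl.1 hl.2) _)
      rw [← huv]
      exact (Nat.factorization_lt l hz0).le
  refine ⟨{κ // κ ∈ K}, inferInstance, M, A, B, G, U, V, ⟨?_, ?_, ?_, hA, hB, ?_, ?_, ?_, ?_⟩⟩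
  · have h1 : ∏ κ ∈ K, ∏ l ∈ P with key l = κ, l ^ (u l + v l) = ∏ l ∈ P, l ^ (u l + v l) :=
      Finset.prod_fiberwise_of_maps_to (fun l hl => Finset.mem_image_of_mem key hl) _
    have h2 : ∏ κ, M κ = ∏ κ ∈ K, ∏ l ∈ P with key l = κ, l ^ (u l + v l) :=
      Finset.prod_coe_sort K (fun κ => ∏ l ∈ P with key l = κ, l ^ (u l + v l))
    rw [h2, h1]
    conv_rhs => rw [← Nat.prod_factorization_pow_eq_self hz0]
    rw [Finsupp.prod, Nat.support_factorization]
    exact Finset.prod_congr rfl fun l _ => by rw [huv]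
  · intro κ
    have hpr := Nat.prime_of_mem_primeFactors (hrepP κ)
    have h1 : rep κ ∣ M κ :=
      (dvd_pow_self _ (hPpos _ (hrepP κ)).ne').trans
        (Finset.dvd_prod_of_mem (fun l => l ^ (u l + v l))
          (Finset.mem_filter.2 ⟨hrepP κ, hrepk κ⟩))
    have h2 : 0 < M κ := Finset.prod_pos fun l hl =>
      pow_pos (Nat.prime_of_mem_primeFactors (Finset.mem_filter.1 hl).1).pos _
    exact hpr.one_lt.trans_le (Nat.le_of_dvd h2 h1)
  · intro κ κ' hne
    refine hcop κ' _ fun l hl hlk hd => ?_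
    obtain ⟨m, hm, hlm⟩ := (Nat.prime_of_mem_primeFactors hl).prime.exists_mem_finset_dvd hd
    rw [Finset.mem_filter] at hm
    have h1 := (Nat.prime_dvd_prime_iff_eq (Nat.prime_of_mem_primeFactors hl)
      (Nat.prime_of_mem_primeFactors hm.1)).1
        ((Nat.prime_of_mem_primeFactors hl).dvd_of_dvd_pow hlm)
    exact hne (Subtype.ext (by rw [← hm.2, ← hlk, h1]))
  · intro κ h
    have h1 := hind _ _ ((hA κ).trans ((congrArg (· * G κ) h).trans (hB κ).symm))
    have := hPpos _ (hrepP κ)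
    simp only [U, V] at h1
    omega
  · intro κ
    exact hcop κ _ fun l hl hlk => ((hcmp κ l hl).1
      (heq _ (hrepP κ) l hl (by rw [hrepk, hlk]))).1
  · intro κ
    exact hcop κ _ fun l hl hlk => ((hcmp κ l hl).1
      (heq _ (hrepP κ) l hl (by rw [hrepk, hlk]))).2
  · intro a κ hne
    rcases lt_trichotomy a.1 κ.1 with h | h | h
    · right
      have hc : ∀ l ∈ P, key l = a.1 → l ∣ B κ ∧ ¬ l ∣ A κ := by
        intro l hl hla
        refine (hcmp κ l hl).2.2 ?_
        have := hlt l hl _ (hrepP κ) (by rw [hla, hrepk]; exact h)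
        simp only [U, V]
        simp only [hu, hv] at this ⊢
        nlinarith
      exact ⟨hdvd a _ fun l hl hla => (hc l hl hla).1, hcop a _ fun l hl hla => (hc l hl hla).2⟩
    · exact absurd (Subtype.ext h) hne
    · left
      have hc : ∀ l ∈ P, key l = a.1 → l ∣ A κ ∧ ¬ l ∣ B κ := by
        intro l hl hla
        refine (hcmp κ l hl).2.1 ?_
        have := hlt _ (hrepP κ) l hl (by rw [hla, hrepk]; exact h)
        simp only [U, V]
        simp only [hu, hv] at this ⊢
        nlinarith
      exact ⟨hdvd a _ fun l hl hla => (hc l hl hla).1, hcop a _ fun l hl hla => (hc l hl hla).2⟩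

/-! ### Sums of products of powers in all residue classes modulo `(p * q) ^ w` -/

section Step

variable {ι : Type} {p q : ℕ} {M A B G U V : ι → ℕ}

open Classical in
/-- The exponent of `A m` in `edgeVal M A B N k τ`, that of `B m` being its complement to `N`. It is
`τ` at `m = k`, and an extreme value at every other `m`, namely the one that removes the factor not
coprime to `M k`. -/
noncomputable def edgeExp (M B : ι → ℕ) (N : ℕ) (k : ι) (τ : ℕ) (m : ι) : ℕ :=
  if m = k then τ else if (B m).Coprime (M k) then 0 else N

/-- For `τ` from `0` to `N`, the values `edgeVal M A B N k τ` form a geometric progression of ratio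
`A k / B k`, all coprime to `M k`. Up to the factor `∏ m, G m ^ N`, common to all `k` and `τ`, they
are products of a power of `p` and a power of `q` (`prod_mul_edgeVal`), whose exponents run along an
edge of a convex polygon. -/
noncomputable def edgeVal [Fintype ι] (M A B : ι → ℕ) (N : ℕ) (k : ι) (τ : ℕ) : ℕ :=
  ∏ m, A m ^ edgeExp M B N k τ m * B m ^ (N - edgeExp M B N k τ m)

lemma edgeExp_le {N τ : ℕ} (k m : ι) (hτ : τ ≤ N) : edgeExp M B N k τ m ≤ N := by
  unfold edgeExp; split_ifs <;> omega

lemma edgeExp_self (N τ : ℕ) (k : ι) : edgeExp M B N k τ k = τ := by simp [edgeExp]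

variable [Fintype ι]

lemma edgeVal_eq (hs : IsSplitting p q M A B G U V) (N : ℕ) (k : ι) :
    ∃ c : ℕ, c.Coprime (M k) ∧ ∀ τ, edgeVal M A B N k τ = c * (A k ^ τ * B k ^ (N - τ)) := by
  classical
  refine ⟨∏ m ∈ Finset.univ.erase k, A m ^ edgeExp M B N k 0 m * B m ^ (N - edgeExp M B N k 0 m),
    ?_, fun τ => ?_⟩
  · refine Nat.Coprime.prod_left fun m hm => ?_
    have hmk := Finset.ne_of_mem_erase hm
    by_cases h : (B m).Coprime (M k)
    · have h0 : edgeExp M B N k 0 m = 0 := by rw [edgeExp, if_neg hmk, if_pos h]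
      rw [h0, pow_zero, one_mul]
      exact h.pow_left _
    · have h2 : (A m).Coprime (M k) := by
        rcases hs.cross k m hmk.symm with h' | h'
        · exact absurd h'.2 h
        · exact h'.2
      have h0 : edgeExp M B N k 0 m = N := by rw [edgeExp, if_neg hmk, if_neg h]
      rw [h0, Nat.sub_self, pow_zero, mul_one]
      exact h2.pow_left _
  · unfold edgeVal
    rw [← Finset.prod_erase_mul _ _ (Finset.mem_univ k), edgeExp_self]
    congr 1
    refine Finset.prod_congr rfl fun m hm => ?_
    simp [edgeExp, Finset.ne_of_mem_erase hm]

lemma edgeVal_coprime (hs : IsSplitting p q M A B G U V) (N : ℕ) (k : ι) (τ : ℕ) :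
    (edgeVal M A B N k τ).Coprime (M k) := by
  obtain ⟨c, hc, h⟩ := edgeVal_eq hs N k
  rw [h]
  exact hc.mul_left (((hs.coprime_A k).pow_left _).mul_left ((hs.coprime_B k).pow_left _))

/-- Away from its end points, the edge `k` consists of multiples of `M a ^ w` for each `a ≠ k`, so
that the edges can be used independently of each other modulo the various `M a ^ w`. -/
lemma dvd_edgeVal (hs : IsSplitting p q M A B G U V) {N w τ : ℕ} {a k : ι} (hak : a ≠ k)
    (h1 : p * q * w ≤ τ) (h2 : τ + p * q * w ≤ N) : M a ^ w ∣ edgeVal M A B N k τ := by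
  obtain ⟨c, -, h⟩ := edgeVal_eq hs N k
  rw [h]
  refine Dvd.dvd.mul_left ?_ c
  rcases hs.cross a k hak with h' | h'
  · refine Dvd.dvd.mul_right ?_ _
    refine (pow_dvd_pow_of_dvd h'.1 w).trans ?_
    rw [← pow_mul]; exact pow_dvd_pow _ h1
  · refine Dvd.dvd.mul_left ?_ _
    refine (pow_dvd_pow_of_dvd h'.1 w).trans ?_
    rw [← pow_mul]; exact pow_dvd_pow _ (by omega)

lemma prod_mul_edgeVal (hs : IsSplitting p q M A B G U V) {N τ : ℕ} (k : ι) (hτ : τ ≤ N) :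
    (∏ m, G m ^ N) * edgeVal M A B N k τ =
      p ^ (∑ m, V m * edgeExp M B N k τ m) * q ^ (∑ m, U m * (N - edgeExp M B N k τ m)) := by
  unfold edgeVal
  rw [← Finset.prod_mul_distrib, ← Finset.prod_pow_eq_pow_sum, ← Finset.prod_pow_eq_pow_sum,
    ← Finset.prod_mul_distrib]
  refine Finset.prod_congr rfl fun m _ => ?_
  rw [pow_mul, pow_mul, hs.pow_p, hs.pow_q, mul_pow, mul_pow]
  have hle := edgeExp_le (M := M) (B := B) k m hτ
  generalize edgeExp M B N k τ m = i at hle ⊢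
  obtain ⟨j, rfl⟩ := Nat.exists_eq_add_of_le hle
  rw [Nat.add_sub_cancel_left]
  ring

lemma edgeVal_injOn (hs : IsSplitting p q M A B G U V) (hp : 0 < p) (hq : 0 < q) (N : ℕ) (k : ι) :
    Set.InjOn (edgeVal M A B N k) (Set.Iic N) := by
  obtain ⟨c, hc, h⟩ := edgeVal_eq hs N k
  have hc0 : 0 < c := by
    rcases Nat.eq_zero_or_pos c with rfl | h0
    · have := hs.one_lt k
      rw [Nat.coprime_zero_left] at hc
      omega
    · exact h0
  have hA0 : 0 < A k := Nat.pos_of_mul_pos_right (hs.pow_p k ▸ pow_pos hp _)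
  have hB0 : 0 < B k := Nat.pos_of_mul_pos_right (hs.pow_q k ▸ pow_pos hq _)
  have aux : ∀ s t : ℕ, s < t → t ≤ N → edgeVal M A B N k s ≠ edgeVal M A B N k t := by
    intro s t hst htN heq
    rw [h, h] at heq
    have h1 := Nat.eq_of_mul_eq_mul_left hc0 heq
    obtain ⟨j, rfl⟩ := Nat.exists_eq_add_of_le hst.le
    rw [show N - s = (N - (s + j)) + j by omega, pow_add, pow_add] at h1
    have h2 : (A k ^ s * B k ^ (N - (s + j))) * B k ^ j =
        (A k ^ s * B k ^ (N - (s + j))) * A k ^ j := by rw [mul_assoc, h1]; ring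
    have h3 := Nat.eq_of_mul_eq_mul_left (by positivity) h2
    exact hs.ne k (Nat.pow_left_injective (show j ≠ 0 by omega) h3).symm
  intro s hs' t ht' heq
  rcases lt_trichotomy s t with hl | hl | hl
  · exact absurd heq (aux s t hl ht')
  · exact hl
  · exact absurd heq.symm (aux t s hl hs')

lemma edgeVal_le (hs : IsSplitting p q M A B G U V) (hp : 0 < p) (hq : 0 < q) {N τ : ℕ} (k : ι)
    (hτ : τ ≤ N) : edgeVal M A B N k τ ≤ (∏ m, p ^ V m * q ^ U m) ^ N := by
  rw [← Finset.prod_pow]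
  refine Finset.prod_le_prod' fun m _ => ?_
  have hAG : 0 < A m * G m := hs.pow_p m ▸ pow_pos hp _
  have hBG : 0 < B m * G m := hs.pow_q m ▸ pow_pos hq _
  have h1 : A m ≤ p ^ V m := by
    rw [hs.pow_p]; exact Nat.le_mul_of_pos_right _ (Nat.pos_of_mul_pos_left hAG)
  have h2 : B m ≤ q ^ U m := by
    rw [hs.pow_q]; exact Nat.le_mul_of_pos_right _ (Nat.pos_of_mul_pos_left hBG)
  have h3 := edgeExp_le (M := M) (B := B) k m hτ
  rw [mul_pow]
  exact Nat.mul_le_mul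
    ((Nat.pow_le_pow_left h1 _).trans (Nat.pow_le_pow_right (pow_pos hp _) h3))
    ((Nat.pow_le_pow_left h2 _).trans (Nat.pow_le_pow_right (pow_pos hq _) (Nat.sub_le _ _)))

/-- Every residue class mod `M k ^ w` is a sum of boundedly many values on the edge `k`. -/
lemma exists_edge_sum (hs : IsSplitting p q M A B G U V) (k : ι) :
    ∃ C : ℕ, ∀ w N o y : ℕ, o + C * M k ^ w ≤ N → ∃ S : Finset ℕ,
      (∀ τ ∈ S, o ≤ τ ∧ τ < o + C * M k ^ w) ∧ S.card ≤ C ∧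
      ((∑ τ ∈ S, edgeVal M A B N k τ : ℕ) : ZMod (M k ^ w)) = y := by
  obtain ⟨C, hC⟩ := exists_sum_pow_eq (hs.one_lt k).le (hs.ne k) (hs.coprime_A k) (hs.coprime_B k)
  refine ⟨C, fun w N o y hN => ?_⟩
  obtain ⟨c, hc, hval⟩ := edgeVal_eq hs N k
  set c' : ℕ := c * (A k ^ o * B k ^ (N - o)) with hc'
  have hcop : c'.Coprime (M k ^ w) := Nat.Coprime.pow_right _
    (hc.mul_left (((hs.coprime_A k).pow_left _).mul_left ((hs.coprime_B k).pow_left _)))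
  have hcu : (c' : ZMod (M k ^ w)) * (c' : ZMod (M k ^ w))⁻¹ = 1 := ZMod.coe_mul_inv_eq_one _ hcop
  have hBu : (B k : ZMod (M k ^ w)) * (B k : ZMod (M k ^ w))⁻¹ = 1 :=
    ZMod.coe_mul_inv_eq_one _ ((hs.coprime_B k).pow_right w)
  obtain ⟨S, hS, hcard, hsum⟩ := hC w ((c' : ZMod (M k ^ w))⁻¹ * y)
  refine ⟨S.image (o + ·), ?_, Finset.card_image_le.trans hcard, ?_⟩
  · intro τ hτ
    obtain ⟨σ, hσ, rfl⟩ := Finset.mem_image.1 hτ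
    have := hS σ hσ
    omega
  · rw [Finset.sum_image (fun a _ b _ h => Nat.add_left_cancel h), Nat.cast_sum]
    have hterm : ∀ σ ∈ S, ((edgeVal M A B N k (o + σ) : ℕ) : ZMod (M k ^ w)) =
        c' * ((A k : ZMod (M k ^ w)) * (B k : ZMod (M k ^ w))⁻¹) ^ σ := by
      intro σ hσ
      have h1 := hS σ hσ
      rw [hval, hc', show N - o = (N - (o + σ)) + σ by omega]
      push_cast
      rw [pow_add, pow_add, mul_pow]
      have h2 : (B k : ZMod (M k ^ w)) ^ σ * ((B k : ZMod (M k ^ w))⁻¹) ^ σ = 1 := by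
        rw [← mul_pow, hBu, one_pow]
      linear_combination (-(c : ZMod (M k ^ w)) * (A k : ZMod (M k ^ w)) ^ o *
        (A k : ZMod (M k ^ w)) ^ σ * (B k : ZMod (M k ^ w)) ^ (N - (o + σ))) * h2
    rw [Finset.sum_congr rfl hterm, ← Finset.mul_sum, hsum, ← mul_assoc, hcu, one_mul]

/-- Every residue class modulo `(p * q) ^ w` contains a sum of at most `C` distinct numbers `x` such
that `R * x` is of the form `p ^ a * q ^ b`, where `C` does not depend on `w`, and `R` and the
sum are at most exponential in `(p * q) ^ w`. By the Chinese remainder theorem, the edge `k` takes care of the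
modulus `M k ^ w`. The condition `¬ (p * q) ^ w ∣ x` keeps the terms of successive steps apart. The
condition `a + p * q ≤ b` keeps them apart from the base-`p * q` expansions. -/
lemma exists_step (hs : IsSplitting p q M A B G U V) (hp : 1 < p) (hq : 1 < q) :
    ∃ C Λ : ℕ, 0 < Λ ∧ ∀ w : ℕ, 0 < w → ∃ R L : ℕ, 0 < R ∧ R ≤ Λ ^ ((p * q) ^ w) ∧
      L ≤ Λ ^ ((p * q) ^ w) ∧ ∀ n : ℕ, ∃ F : Finset ℕ, F.card ≤ C ∧
      (∀ x ∈ F, ¬ (p * q) ^ w ∣ x ∧ ∃ a b : ℕ, R * x = p ^ a * q ^ b ∧ a + p * q ≤ b) ∧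
      ∑ x ∈ F, x ≤ L ∧ ∑ x ∈ F, x ≡ n [MOD (p * q) ^ w] := by
  classical
  have hp0 : 0 < p := by omega
  have hq0 : 0 < q := by omega
  have hz0 : 0 < p * q := Nat.mul_pos hp0 hq0
  choose C hC using exists_edge_sum hs
  set z := p * q with hz
  set T := ∑ k, C k with hT
  set Λ₁ := ∏ m, p ^ V m * q ^ U m with hΛ₁
  have hΛ₁0 : 0 < Λ₁ := Finset.prod_pos fun m _ => Nat.mul_pos (pow_pos hp0 _) (pow_pos hq0 _)
  set H := q ^ (∑ m, V m) * Λ₁ with hH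
  have hH0 : 0 < H := Nat.mul_pos (pow_pos hq0 _) hΛ₁0
  have hΛH : Λ₁ ≤ H := Nat.le_mul_of_pos_left _ (pow_pos hq0 _)
  have hMz : ∀ k, M k ∣ z := fun k => by
    rw [hz, ← hs.prod_eq]; exact Finset.dvd_prod_of_mem M (Finset.mem_univ k)
  refine ⟨T, (T + 1) * q ^ z * H ^ (T + 2 * z), by positivity, fun w hw => ?_⟩
  -- the room `z * w` left at both ends of each edge is what `dvd_edgeVal` needs
  set N := T * z ^ w + 2 * (z * w) with hN
  have hw_le : w ≤ z ^ w := (Nat.lt_pow_self (show 1 < z by rw [hz]; nlinarith)).le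
  have hNle : N ≤ (T + 2 * z) * z ^ w := by
    rw [hN]; nlinarith [Nat.mul_le_mul_left (2 * z) hw_le]
  have hzw0 : z ^ w ≠ 0 := (pow_pos hz0 w).ne'
  have hbig : (T + 1) * q ^ z * H ^ N ≤ ((T + 1) * q ^ z * H ^ (T + 2 * z)) ^ (z ^ w) := by
    rw [mul_pow ((T + 1) * q ^ z), ← pow_mul]
    exact Nat.mul_le_mul (Nat.le_self_pow hzw0 _) (Nat.pow_le_pow_right hH0 hNle)
  have hGpos : ∀ m, 0 < G m := fun m => Nat.pos_of_mul_pos_left (hs.pow_p m ▸ pow_pos hp0 (V m))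
  -- the power of `q` in `R` makes the exponent of `q` exceed that of `p` by `z`
  refine ⟨q ^ (N * ∑ m, V m + z) * ∏ m, G m ^ N, T * Λ₁ ^ N, ?_, ?_, ?_, fun n => ?_⟩
  · exact Nat.mul_pos (pow_pos hq0 _) (Finset.prod_pos fun m _ => pow_pos (hGpos m) _)
  · refine le_trans ?_ hbig
    have h1 : ∏ m, G m ^ N ≤ Λ₁ ^ N := by
      rw [hΛ₁, ← Finset.prod_pow]
      refine Finset.prod_le_prod' fun m _ => Nat.pow_le_pow_left ?_ N
      have hA0 : 0 < A m := Nat.pos_of_mul_pos_right (hs.pow_p m ▸ pow_pos hp0 (V m))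
      calc G m ≤ A m * G m := Nat.le_mul_of_pos_left _ hA0
        _ = p ^ V m := (hs.pow_p m).symm
        _ ≤ _ := Nat.le_mul_of_pos_right _ (pow_pos hq0 _)
    calc q ^ (N * ∑ m, V m + z) * ∏ m, G m ^ N
        ≤ q ^ (N * ∑ m, V m + z) * Λ₁ ^ N := Nat.mul_le_mul_left _ h1
      _ = q ^ z * H ^ N := by rw [hH, mul_pow, pow_add, mul_comm N, pow_mul]; ring
      _ ≤ (T + 1) * q ^ z * H ^ N := Nat.mul_le_mul_right _ (Nat.le_mul_of_pos_left _ (by omega))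
  · refine le_trans ?_ hbig
    exact Nat.mul_le_mul (by
      have : 1 ≤ q ^ z := pow_pos hq0 _
      nlinarith) (Nat.pow_le_pow_left hΛH N)
  · have hCN : ∀ k, z * w + C k * M k ^ w + z * w ≤ N := fun k => by
      have h1 : C k ≤ T :=
        Finset.single_le_sum (f := C) (fun _ _ => Nat.zero_le _) (Finset.mem_univ k)
      have h2 : M k ^ w ≤ z ^ w := Nat.pow_le_pow_left (Nat.le_of_dvd hz0 (hMz k)) w
      have := Nat.mul_le_mul h1 h2
      omega
    have hex := fun k => hC k w N (z * w) n (by have := hCN k; omega)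
    choose S hS hScard hSsum using hex
    set f := edgeVal M A B N with hf
    have hτ : ∀ k, ∀ τ ∈ S k, z * w ≤ τ ∧ τ + z * w ≤ N := fun k τ h => by
      have h1 := hS k τ h
      have h2 := hCN k
      omega
    -- only the values on the edge `k` are coprime to `M k`
    have hdisj : ∀ k k', k ≠ k' → Disjoint ((S k).image (f k)) ((S k').image (f k')) := by
      intro k k' hne
      rw [Finset.disjoint_left]
      intro x hx hx'
      obtain ⟨τ, -, rfl⟩ := Finset.mem_image.1 hx
      obtain ⟨τ', hτ', heq⟩ := Finset.mem_image.1 hx'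
      have h1 : M k ∣ f k' τ' := (dvd_pow_self _ hw.ne').trans
        (dvd_edgeVal hs hne (hτ k' τ' hτ').1 (hτ k' τ' hτ').2)
      rw [heq] at h1
      exact Nat.not_coprime_of_dvd_of_dvd (hs.one_lt k) h1 dvd_rfl (edgeVal_coprime hs N k τ)
    have hsumF : ∀ g : ℕ → ℕ, ∑ x ∈ Finset.univ.biUnion (fun k => (S k).image (f k)), g x =
        ∑ k, ∑ τ ∈ S k, g (f k τ) := by
      intro g
      rw [Finset.sum_biUnion fun k _ k' _ hne => hdisj k k' hne]
      refine Finset.sum_congr rfl fun k _ => Finset.sum_image fun a ha b hb hab => ?_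
      refine edgeVal_injOn hs hp0 hq0 N k ?_ ?_ hab
      · exact Set.mem_Iic.2 (by have := hτ k a ha; omega)
      · exact Set.mem_Iic.2 (by have := hτ k b hb; omega)
    refine ⟨Finset.univ.biUnion fun k => (S k).image (f k), ?_, ?_, ?_, ?_⟩
    · exact Finset.card_biUnion_le.trans
        (Finset.sum_le_sum fun k _ => Finset.card_image_le.trans (hScard k))
    · intro x hx
      obtain ⟨k, -, hx⟩ := Finset.mem_biUnion.1 hx
      obtain ⟨τ, hτS, rfl⟩ := Finset.mem_image.1 hx
      have hτN : τ ≤ N := by have := hτ k τ hτS; omega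
      refine ⟨fun hd => ?_, ∑ m, V m * edgeExp M B N k τ m,
        N * ∑ m, V m + z + ∑ m, U m * (N - edgeExp M B N k τ m), ?_, ?_⟩
      · exact Nat.not_coprime_of_dvd_of_dvd (hs.one_lt k)
          (((hMz k).trans (dvd_pow_self _ hw.ne')).trans hd) dvd_rfl (edgeVal_coprime hs N k τ)
      · rw [mul_assoc, prod_mul_edgeVal hs k hτN, pow_add _ (N * _ + z)]; ring
      · have : ∑ m, V m * edgeExp M B N k τ m ≤ N * ∑ m, V m := by
          rw [Finset.mul_sum]
          refine Finset.sum_le_sum fun m _ => ?_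
          rw [mul_comm]
          exact Nat.mul_le_mul_right _ (edgeExp_le k m hτN)
        omega
    · rw [hsumF fun x => x, hT, Finset.sum_mul]
      refine Finset.sum_le_sum fun k _ => ?_
      refine (Finset.sum_le_card_nsmul _ _ (Λ₁ ^ N) fun τ h => ?_).trans ?_
      · exact edgeVal_le hs hp0 hq0 k (by have := hτ k τ h; omega)
      · rw [smul_eq_mul]; exact Nat.mul_le_mul_right _ (hScard k)
    · rw [hsumF fun x => x, Nat.modEq_iff_dvd, hz, ← hs.prod_eq, ← Finset.prod_pow]
      push_cast
      refine Fintype.prod_dvd_of_coprime ?_ ?_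
      · intro a b hab
        have := (hs.coprime hab).pow w w
        simpa [Function.onFun] using Nat.isCoprime_iff_coprime.2 this
      · intro a
        have h1 : ((∑ k, ∑ τ ∈ S k, f k τ : ℕ) : ZMod (M a ^ w)) = (n : ℕ) := by
          rw [← Finset.add_sum_erase _ _ (Finset.mem_univ a), Nat.cast_add, hSsum,
            add_eq_left, ZMod.natCast_eq_zero_iff]
          refine Finset.dvd_sum fun k hk => Finset.dvd_sum fun τ h => ?_
          exact dvd_edgeVal hs (Finset.ne_of_mem_erase hk).symm (hτ k τ h).1 (hτ k τ h).2
        have h2 := Nat.modEq_iff_dvd.1 ((ZMod.natCast_eq_natCast_iff _ _ _).1 h1)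
        push_cast at h2
        exact h2

end Step

/-! ### Representations and base-`z` expansions -/

section Representations

variable {r : ℕ} {b : Fin r → ℕ} {D : Finset ℕ}

/-- The exponents of a power-product are unique. -/
lemma MultIndep.eq_of_prod_eq (hindep : MultIndep r b) (hb : ∀ j, 1 < b j) {α β : Fin r → ℕ}
    (h : ∏ j, b j ^ α j = ∏ j, b j ^ β j) : α = β := by
  have hb0 : ∀ j, (b j : ℝ) ≠ 0 := fun j => by have := hb j; positivity
  have h1 := hindep (fun j => (α j : ℤ) - β j) (by
    have h2 : ∏ j, (b j : ℝ) ^ α j = ∏ j, (b j : ℝ) ^ β j := by exact_mod_cast h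
    have h3 : ∏ j, (b j : ℝ) ^ β j ≠ 0 := Finset.prod_ne_zero_iff.2 fun j _ => pow_ne_zero _ (hb0 j)
    simp_rw [zpow_sub₀ (hb0 _), zpow_natCast]
    rw [Finset.prod_div_distrib, h2, div_self h3])
  funext j
  have := congrFun h1 j
  simp only [Pi.zero_apply] at this
  omega

lemma prod_pow_single_add_single (b : Fin r → ℕ) (i j : Fin r) (s t : ℕ) :
    ∏ k, b k ^ (Pi.single i s + Pi.single j t : Fin r → ℕ) k = b i ^ s * b j ^ t := by
  simp only [Pi.add_apply, pow_add, Finset.prod_mul_distrib]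
  simp [Pi.single_apply, pow_ite]

lemma IsPowerProduct.pow_mul_pow (b : Fin r → ℕ) (i j : Fin r) (s t : ℕ) :
    IsPowerProduct r b (b i ^ s * b j ^ t) :=
  ⟨_, (prod_pow_single_add_single b i j s t).symm⟩

lemma IsPowerProduct.mul {x y : ℕ} (hx : IsPowerProduct r b x) (hy : IsPowerProduct r b y) :
    IsPowerProduct r b (x * y) := by
  obtain ⟨α, rfl⟩ := hx
  obtain ⟨β, rfl⟩ := hy
  exact ⟨α + β, by simp [pow_add, Finset.prod_mul_distrib]⟩

lemma IsPowerProduct.pos (hb : ∀ j, 1 < b j) {x : ℕ} (hx : IsPowerProduct r b x) : 0 < x := by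
  obtain ⟨α, rfl⟩ := hx
  exact Finset.prod_pos fun j _ => pow_pos (by have := hb j; omega) _

lemma IsMultiBaseRepr.add {m n : ℕ} {d e : ℕ →₀ ℕ} (hd : IsMultiBaseRepr r b D m d)
    (he : IsMultiBaseRepr r b D n e) (hde : Disjoint d.support e.support) :
    IsMultiBaseRepr r b D (m + n) (d + e) := by
  refine ⟨fun B => ?_, fun B hB => ?_, ?_⟩
  · by_cases hB : B ∈ d.support
    · have : e B = 0 := Finsupp.notMem_support_iff.1 (Finset.disjoint_left.1 hde hB)
      rw [Finsupp.add_apply, this, add_zero]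
      exact hd.1 B
    · rw [Finsupp.add_apply, Finsupp.notMem_support_iff.1 hB, zero_add]
      exact he.1 B
  · rcases Finset.mem_union.1 (Finsupp.support_add hB) with h | h
    · exact hd.2.1 B h
    · exact he.2.1 B h
  · have h := Finsupp.sum_add_index' (f := d) (g := e) (h := fun B c => c * B)
      (fun _ => zero_mul _) (fun _ _ _ => add_mul _ _ _)
    rw [hd.2.2, he.2.2]
    exact h.symm

lemma IsMultiBaseRepr.embDomain (hD0 : 0 ∈ D) {n z : ℕ} {d : ℕ →₀ ℕ}
    (hd : IsMultiBaseRepr r b D n d) (hz : IsPowerProduct r b z) (f : ℕ ↪ ℕ)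
    (hf : ∀ x, f x = z * x) : IsMultiBaseRepr r b D (z * n) (d.embDomain f) := by
  refine ⟨fun B => ?_, fun B hB => ?_, ?_⟩
  · by_cases hB : B ∈ Set.range f
    · obtain ⟨x, rfl⟩ := hB
      rw [Finsupp.embDomain_apply_self]
      exact hd.1 x
    · rw [Finsupp.embDomain_of_notMem_range _ _ _ hB]
      exact hD0
  · rw [Finsupp.support_embDomain, Finset.mem_map] at hB
    obtain ⟨x, hx, rfl⟩ := hB
    rw [hf]
    exact hz.mul (hd.2.1 x hx)
  · rw [Finsupp.support_embDomain, Finset.sum_map, hd.2.2, Finset.mul_sum]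
    refine Finset.sum_congr rfl fun x _ => ?_
    rw [Finsupp.embDomain_apply_self, hf]
    ring

lemma exists_repr_of_finset (hD0 : 0 ∈ D) (hD1 : 1 ∈ D) (S : Finset ℕ)
    (hS : ∀ B ∈ S, IsPowerProduct r b B) :
    ∃ d : ℕ →₀ ℕ, IsMultiBaseRepr r b D (∑ B ∈ S, B) d ∧ d.support ⊆ S := by
  classical
  have hsub : (Finsupp.onFinset S (fun B => if B ∈ S then 1 else 0)
      (fun B h => by by_contra hB; simp [hB] at h)).support ⊆ S := Finsupp.support_onFinset_subset
  refine ⟨_, ⟨fun B => ?_, fun B hB => hS B (hsub hB), ?_⟩, hsub⟩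
  · rw [Finsupp.onFinset_apply]
    split_ifs
    exacts [hD1, hD0]
  · rw [Finset.sum_subset hsub fun B _ hB => by rw [Finsupp.notMem_support_iff.1 hB, zero_mul]]
    refine Finset.sum_congr rfl fun B hB => ?_
    rw [Finsupp.onFinset_apply, if_pos hB, one_mul]

/-- `y` has a representation of weight at most `W` all of whose power-products have the form
`z ^ i * B'` with a power-product `B' < z`. When `z` is the product of two of the bases, the
exponents of these two bases in such a power-product differ by less than `z`. -/
def HasDiagRepr (r : ℕ) (b : Fin r → ℕ) (D : Finset ℕ) (z y W : ℕ) : Prop :=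
  ∃ d : ℕ →₀ ℕ, IsMultiBaseRepr r b D y d ∧ d.support.card ≤ W ∧
    ∀ B ∈ d.support, ∃ i B' : ℕ, IsPowerProduct r b B' ∧ B' < z ∧ B = z ^ i * B'

lemma HasDiagRepr.mono {z y W W' : ℕ} (h : HasDiagRepr r b D z y W) (hW : W ≤ W') :
    HasDiagRepr r b D z y W' := by
  obtain ⟨d, h1, h2, h3⟩ := h
  exact ⟨d, h1, h2.trans hW, h3⟩

lemma hasDiagRepr_zero (hD0 : 0 ∈ D) (z : ℕ) : HasDiagRepr r b D z 0 0 :=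
  ⟨0, ⟨fun _ => hD0, by simp, by simp⟩, by simp, by simp⟩

lemma HasDiagRepr.mul (hD0 : 0 ∈ D) {z y W : ℕ} (hz0 : 0 < z) (hz : IsPowerProduct r b z)
    (h : HasDiagRepr r b D z y W) : HasDiagRepr r b D z (z * y) W := by
  obtain ⟨d, h1, h2, h3⟩ := h
  let f : ℕ ↪ ℕ := ⟨(z * ·), fun _ _ h => Nat.eq_of_mul_eq_mul_left hz0 h⟩
  refine ⟨d.embDomain f, h1.embDomain hD0 hz f fun _ => rfl, ?_, fun B hB => ?_⟩
  · rwa [Finsupp.support_embDomain, Finset.card_map]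
  · rw [Finsupp.support_embDomain, Finset.mem_map] at hB
    obtain ⟨x, hx, rfl⟩ := hB
    obtain ⟨i, B', hB', hlt, rfl⟩ := h3 x hx
    exact ⟨i + 1, B', hB', hlt, by change z * _ = _; ring⟩

/-- A new lowest base-`z` digit `c`. Any representation of `c` uses power-products less than `z`
only, and these cannot collide with multiples of `z`. -/
lemma HasDiagRepr.add_mul (hb : ∀ j, 1 < b j) (hD0 : 0 ∈ D)
    (hall : ∀ n : ℕ, 0 < n → ∃ d : ℕ →₀ ℕ, IsMultiBaseRepr r b D n d) {z y W c : ℕ}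
    (hz : IsPowerProduct r b z) (hc : c < z) (h : HasDiagRepr r b D z y W) :
    HasDiagRepr r b D z (c + z * y) (W + z) := by
  classical
  rcases Nat.eq_zero_or_pos c with rfl | hc0
  · rw [zero_add]
    exact (h.mul hD0 (by omega) hz).mono (by omega)
  obtain ⟨d, h1, h2, h3⟩ := h
  obtain ⟨e, he⟩ := hall c hc0
  have hele : ∀ B ∈ e.support, 0 < B ∧ B < z := by
    intro B hB
    refine ⟨(he.2.1 B hB).pos hb, lt_of_le_of_lt ?_ hc⟩
    rw [he.2.2]
    refine le_trans ?_ (Finset.single_le_sum (f := fun B => e B * B)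
      (fun _ _ => Nat.zero_le _) hB)
    exact Nat.le_mul_of_pos_left _ (Nat.pos_of_ne_zero (Finsupp.mem_support_iff.1 hB))
  let f : ℕ ↪ ℕ := ⟨(z * ·), fun _ _ h => Nat.eq_of_mul_eq_mul_left (by omega : 0 < z) h⟩
  have hdisj : Disjoint e.support (d.embDomain f).support := by
    rw [Finset.disjoint_left]
    intro B hB hB'
    rw [Finsupp.support_embDomain, Finset.mem_map] at hB'
    obtain ⟨x, hx, rfl⟩ := hB'
    have h4 := (hele _ hB).2
    have h5 := (h1.2.1 x hx).pos hb
    change z * x < z at h4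
    nlinarith
  refine ⟨e + d.embDomain f, he.add (h1.embDomain hD0 hz f fun _ => rfl) hdisj, ?_,
    fun B hB => ?_⟩
  · have h4 : e.support.card ≤ z := by
      calc e.support.card ≤ (Finset.range z).card :=
            Finset.card_le_card fun B hB => Finset.mem_range.2 (hele B hB).2
        _ = z := Finset.card_range z
    calc _ ≤ e.support.card + (d.embDomain f).support.card :=
          (Finset.card_le_card Finsupp.support_add).trans (Finset.card_union_le _ _)
      _ ≤ _ := by rw [Finsupp.support_embDomain, Finset.card_map]; omega
  · rcases Finset.mem_union.1 (Finsupp.support_add hB) with h | h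
    · exact ⟨0, B, he.2.1 B h, (hele B h).2, by simp⟩
    · rw [Finsupp.support_embDomain, Finset.mem_map] at h
      obtain ⟨x, hx, rfl⟩ := h
      obtain ⟨i, B', hB', hlt, rfl⟩ := h3 x hx
      exact ⟨i + 1, B', hB', hlt, by change z * _ = _; ring⟩

/-- The base-`z` expansion of `u + z ^ k * y`, each base-`z` digit being represented
separately. -/
lemma HasDiagRepr.add_pow_mul (hb : ∀ j, 1 < b j) (hD0 : 0 ∈ D)
    (hall : ∀ n : ℕ, 0 < n → ∃ d : ℕ →₀ ℕ, IsMultiBaseRepr r b D n d) {z y W : ℕ} (hz0 : 0 < z)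
    (hz : IsPowerProduct r b z) (h : HasDiagRepr r b D z y W) (k : ℕ) :
    ∀ u < z ^ k, HasDiagRepr r b D z (u + z ^ k * y) (W + z * k) := by
  induction k with
  | zero =>
    intro u hu
    obtain rfl : u = 0 := by simpa using hu
    simpa using h
  | succ k ih =>
    intro u hu
    have h1 := ih (u / z) (Nat.div_lt_of_lt_mul (by rwa [pow_succ'] at hu))
    have h2 := h1.add_mul hb hD0 hall hz (Nat.mod_lt u hz0)
    have h3 : u % z + z * (u / z + z ^ k * y) = u + z ^ (k + 1) * y := by
      conv_rhs => rw [← Nat.mod_add_div u z]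
      ring
    rw [h3] at h2
    exact h2.mono (by rw [mul_add]; omega)

/-- The weight depends on the numbers `k`, `l` of base-`z` digits of `u` and `v` but not on `t`, as
zero digits are free. -/
lemma hasDiagRepr_add_pow_mul (hb : ∀ j, 1 < b j) (hD0 : 0 ∈ D)
    (hall : ∀ n : ℕ, 0 < n → ∃ d : ℕ →₀ ℕ, IsMultiBaseRepr r b D n d) {z : ℕ} (hz1 : 1 < z)
    (hz : IsPowerProduct r b z) {k l u v : ℕ} (hu : u < z ^ k) (hv : v < z ^ l) (t : ℕ) :
    HasDiagRepr r b D z (u + z ^ t * v) (z * (k + l)) := by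
  have hz0 : 0 < z := by omega
  have hsmall : ∀ l v, v < z ^ l → HasDiagRepr r b D z v (z * l) := fun l v hv => by
    simpa using (hasDiagRepr_zero hD0 z).add_pow_mul hb hD0 hall hz0 hz l v hv
  rcases le_total k t with hkt | hkt
  · obtain ⟨j, rfl⟩ := Nat.exists_eq_add_of_le hkt
    have h1 : HasDiagRepr r b D z (z ^ j * v) (z * l) := by
      induction j with
      | zero => simpa using hsmall l v hv
      | succ j ih =>
        have := (ih (by omega)).mul hD0 hz0 hz
        rwa [← mul_assoc, ← pow_succ'] at this
    have h2 := h1.add_pow_mul hb hD0 hall hz0 hz k u hu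
    rw [← mul_assoc, ← pow_add] at h2
    exact h2.mono (by rw [mul_add]; omega)
  · refine hsmall (k + l) _ ?_
    calc u + z ^ t * v ≤ u + z ^ k * v := by gcongr
      _ < z ^ k * (v + 1) := by rw [mul_add]; omega
      _ ≤ z ^ k * z ^ l := Nat.mul_le_mul_left _ hv
      _ = _ := (pow_add _ _ _).symm

end Representations

/-! ### Clearing blocks of digits -/

section Expansion

/-- Iteration of `exists_step`. Each step cancels the lowest `w` base-`p * q` digits of what is left
of `m`, until the remainder `e` drops below a fixed bound. Multiplying `x` by `(p * q) ^ w`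
preserves the difference of the exponents in `R * x`. -/
lemma exists_expansion {p q w C L R : ℕ} (hz1 : 1 < p * q) (hw : 0 < w)
    (hstep : ∀ n : ℕ, ∃ F : Finset ℕ, F.card ≤ C ∧
      (∀ x ∈ F, ¬ (p * q) ^ w ∣ x ∧ ∃ a b : ℕ, R * x = p ^ a * q ^ b ∧ a + p * q ≤ b) ∧
      ∑ x ∈ F, x ≤ L ∧ ∑ x ∈ F, x ≡ n [MOD (p * q) ^ w]) (m : ℕ) :
    ∃ (s e : ℕ) (F : Finset ℕ), m = ∑ x ∈ F, x + (p * q) ^ (w * s) * e ∧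
      e < L + (p * q) ^ w ∧ F.card ≤ C * s ∧
      (∀ x ∈ F, ∃ a b : ℕ, R * x = p ^ a * q ^ b ∧ a + p * q ≤ b) ∧
      (s = 0 ∨ (p * q) ^ (w * s) ≤ m) := by
  classical
  induction m using Nat.strong_induction_on with
  | _ m ih =>
  set z := p * q with hz
  have hzw0 : 0 < z ^ w := pow_pos (by omega) w
  have hzw1 : 1 < z ^ w := Nat.one_lt_pow hw.ne' hz1
  rcases lt_or_ge m (L + z ^ w) with hm | hm
  · exact ⟨0, m, ∅, by simp, hm, by simp, by simp, Or.inl rfl⟩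
  obtain ⟨F₀, hF₀card, hF₀, hF₀L, hF₀mod⟩ := hstep m
  obtain ⟨m', hm'⟩ := (Nat.modEq_iff_dvd' (by omega : ∑ x ∈ F₀, x ≤ m)).1 hF₀mod
  have hmeq : m = ∑ x ∈ F₀, x + z ^ w * m' := by omega
  have hm'0 : 0 < m' := by
    rcases Nat.eq_zero_or_pos m' with rfl | h
    · simp at hmeq; omega
    · exact h
  have hlt : m' < m := by
    have := Nat.mul_lt_mul_of_pos_right hzw1 hm'0
    omega
  obtain ⟨s, e, F, hsum, he, hFcard, hF, hs⟩ := ih m' hlt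
  have hinj : Function.Injective (z ^ w * · : ℕ → ℕ) :=
    fun _ _ h => Nat.eq_of_mul_eq_mul_left hzw0 h
  have hdisj : Disjoint F₀ (F.image (z ^ w * ·)) := by
    rw [Finset.disjoint_left]
    intro x hx hx'
    obtain ⟨y, -, rfl⟩ := Finset.mem_image.1 hx'
    exact (hF₀ _ hx).1 (dvd_mul_right _ _)
  refine ⟨s + 1, e, F₀ ∪ F.image (z ^ w * ·), ?_, he, ?_, ?_, Or.inr ?_⟩
  · rw [Finset.sum_union hdisj, Finset.sum_image hinj.injOn, ← Finset.mul_sum, mul_add w, mul_one,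
      pow_add, hmeq]
    conv_lhs => rw [hsum]
    ring
  · calc _ ≤ F₀.card + (F.image (z ^ w * ·)).card := Finset.card_union_le _ _
      _ ≤ C + C * s := add_le_add hF₀card (Finset.card_image_le.trans hFcard)
      _ = C * (s + 1) := by ring
  · intro x hx
    rcases Finset.mem_union.1 hx with h | h
    · exact (hF₀ x h).2
    · obtain ⟨y, hy, rfl⟩ := Finset.mem_image.1 h
      obtain ⟨a, b, hab, hle⟩ := hF y hy
      refine ⟨a + w, b + w, ?_, by omega⟩
      rw [mul_left_comm, hab, hz, mul_pow, pow_add, pow_add]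
      ring
  · have h1 : z ^ (w * s) ≤ m' := by
      rcases hs with rfl | h
      · rw [mul_zero, pow_zero]
        exact hm'0
      · exact h
    calc z ^ (w * (s + 1)) = z ^ w * z ^ (w * s) := by rw [mul_add, mul_one, pow_add, mul_comm]
      _ ≤ z ^ w * m' := Nat.mul_le_mul_left _ h1
      _ ≤ m := by omega

/-- A representation with one parameter `w` still to be chosen: `s` counts the steps, and the
term `K * z ^ w` accounts for the lowest and the highest base-`z` digits. -/
lemma exists_repr_card_le {r : ℕ} (hr : 2 ≤ r) {b : Fin r → ℕ} (hb : ∀ j, 1 < b j)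
    (hindep : MultIndep r b) {D : Finset ℕ} (hD0 : 0 ∈ D) (hD1 : 1 ∈ D)
    (hall : ∀ n : ℕ, 0 < n → ∃ d : ℕ →₀ ℕ, IsMultiBaseRepr r b D n d) :
    ∃ z K : ℕ, 1 < z ∧ ∀ n w : ℕ, 0 < n → 0 < w → ∃ (d : ℕ →₀ ℕ) (s : ℕ),
      IsMultiBaseRepr r b D n d ∧ z ^ (w * s) ≤ n ∧ d.support.card ≤ K * s + K * z ^ w := by
  classical
  -- only the first two bases are used, except in representations of base-`z` digits
  let i₀ : Fin r := ⟨0, by omega⟩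
  let i₁ : Fin r := ⟨1, by omega⟩
  have hne : i₀ ≠ i₁ := by simp [i₀, i₁]
  set p := b i₀ with hp_def
  set q := b i₁ with hq_def
  have hp : 1 < p := hb i₀
  have hq : 1 < q := hb i₁
  have hind : ∀ s t : ℕ, p ^ s = q ^ t → s = 0 ∧ t = 0 := by
    intro s t hst
    have h := hindep.eq_of_prod_eq hb (α := Pi.single i₀ s + Pi.single i₁ 0)
      (β := Pi.single i₀ 0 + Pi.single i₁ t) (by
        rw [prod_pow_single_add_single, prod_pow_single_add_single]
        simpa using hst)
    have h0 := congrFun h i₀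
    have h1 := congrFun h i₁
    simp [hne, hne.symm] at h0 h1
    exact ⟨h0, h1.symm⟩
  obtain ⟨ι, _, M, A, B, G, U, V, hs⟩ := exists_splitting hp hq hind
  obtain ⟨C, Λ, hΛ0, hstep⟩ := exists_step hs hp hq
  set z := p * q with hz
  have hz1 : 1 < z := by rw [hz]; nlinarith
  have hz0 : 0 < z := by omega
  have hzpp : IsPowerProduct r b z := by
    simpa using IsPowerProduct.pow_mul_pow b i₀ i₁ 1 1
  refine ⟨z, C + z * (3 * Λ + 2), hz1, fun n w hn hw => ?_⟩
  -- `n = n % R + R * (n / R)`; multiplying by `R` turns the terms `x` into power-products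
  obtain ⟨R, L, hR0, hRle, hLle, hstep⟩ := hstep w hw
  obtain ⟨s, e, F, hsum, he, hFcard, hF, hs'⟩ := exists_expansion hz1 hw hstep (n / R)
  set Z := z ^ w with hZ
  have hZ0 : 0 < Z := pow_pos hz0 w
  have hΛZ : Λ ^ Z ≤ z ^ (Λ * Z) := by
    rw [pow_mul]
    exact Nat.pow_le_pow_left (Nat.lt_pow_self hz1).le Z
  have hlow : n % R < z ^ (Λ * Z) := (Nat.mod_lt n hR0).trans_le (hRle.trans hΛZ)
  have hhigh : R * e < z ^ (2 * Λ * Z + Z + 1) := by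
    have h1 : e < z ^ (Λ * Z) + z ^ Z :=
      he.trans_le (add_le_add (hLle.trans hΛZ) (Nat.lt_pow_self hz1).le)
    have h2 : z ^ (Λ * Z) + z ^ Z ≤ z * (z ^ (Λ * Z) * z ^ Z) := by
      have ha : 1 ≤ z ^ (Λ * Z) := pow_pos hz0 _
      have hb : 1 ≤ z ^ Z := pow_pos hz0 _
      generalize z ^ (Λ * Z) = x at ha ⊢
      generalize z ^ Z = y at hb ⊢
      have h3 : x + y ≤ 2 * (x * y) := by nlinarith
      exact h3.trans (Nat.mul_le_mul_right _ hz1)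
    calc R * e < R * (z * (z ^ (Λ * Z) * z ^ Z)) :=
          Nat.mul_lt_mul_of_pos_left (h1.trans_le h2) hR0
      _ ≤ z ^ (Λ * Z) * (z * (z ^ (Λ * Z) * z ^ Z)) := Nat.mul_le_mul_right _ (hRle.trans hΛZ)
      _ = _ := by ring
  obtain ⟨d₁, hd₁, hd₁card, hd₁supp⟩ :=
    hasDiagRepr_add_pow_mul hb hD0 hall hz1 hzpp hlow hhigh (w * s)
  obtain ⟨d₂, hd₂, hd₂supp⟩ := exists_repr_of_finset (b := b) hD0 hD1 (F.image (R * ·)) (by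
    intro x hx
    obtain ⟨y, hy, rfl⟩ := Finset.mem_image.1 hx
    obtain ⟨a, c, hac, -⟩ := hF y hy
    rw [hac]
    exact IsPowerProduct.pow_mul_pow b i₀ i₁ a c)
  -- in `d₁` the exponents of `q` and `p` differ by less than `z`, in `d₂` by at least `z`
  have hdisj : Disjoint d₁.support d₂.support := by
    rw [Finset.disjoint_left]
    intro x hx₁ hx₂
    obtain ⟨i, B', ⟨α, rfl⟩, hlt, rfl⟩ := hd₁supp x hx₁
    obtain ⟨y, hy, hxy⟩ := Finset.mem_image.1 (hd₂supp hx₂)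
    obtain ⟨a, c, hac, hle⟩ := hF y hy
    have h1 : ∏ j, b j ^ (Pi.single i₀ a + Pi.single i₁ c : Fin r → ℕ) j =
        ∏ j, b j ^ ((Pi.single i₀ i + Pi.single i₁ i : Fin r → ℕ) + α) j := by
      have h2 := prod_pow_single_add_single b i₀ i₁ i i
      simp only [Pi.add_apply _ α, pow_add _ _ (α _), Finset.prod_mul_distrib]
      rw [h2, prod_pow_single_add_single, ← hp_def, ← hq_def, ← hac, ← mul_pow, ← hz]
      exact hxy
    have h2 := hindep.eq_of_prod_eq hb h1
    have h3 := congrFun h2 i₀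
    have h4 := congrFun h2 i₁
    simp [hne, hne.symm] at h3 h4
    have h5 : z ≤ α i₁ := by omega
    have h6 : q ^ α i₁ ≤ ∏ j, b j ^ α j :=
      Nat.le_of_dvd (Finset.prod_pos fun j _ => pow_pos (by have := hb j; omega) _)
        (Finset.dvd_prod_of_mem (fun j => b j ^ α j) (Finset.mem_univ i₁))
    have h7 : z < q ^ z := Nat.lt_pow_self hq
    have h8 : q ^ z ≤ q ^ α i₁ := Nat.pow_le_pow_right (by omega) h5
    omega
  have hsumn : n = (n % R + z ^ (w * s) * (R * e)) + ∑ x ∈ F.image (R * ·), x := by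
    rw [Finset.sum_image fun a _ c _ h => Nat.eq_of_mul_eq_mul_left hR0 h, ← Finset.mul_sum]
    conv_lhs => rw [← Nat.mod_add_div n R, hsum]
    ring
  refine ⟨d₁ + d₂, s, ?_, ?_, ?_⟩
  · have := hd₁.add hd₂ hdisj
    rwa [← hsumn] at this
  · rcases hs' with rfl | h
    · rw [mul_zero, pow_zero]
      exact hn
    · exact h.trans (Nat.div_le_self _ _)
  · calc (d₁ + d₂).support.card ≤ d₁.support.card + d₂.support.card :=
          (Finset.card_le_card Finsupp.support_add).trans (Finset.card_union_le _ _)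
      _ ≤ z * (Λ * Z + (2 * Λ * Z + Z + 1)) + C * s :=
          add_le_add hd₁card ((Finset.card_le_card hd₂supp).trans
            (Finset.card_image_le.trans hFcard))
      _ ≤ z * ((3 * Λ + 2) * Z) + C * s := by
          gcongr
          nlinarith
      _ ≤ (C + z * (3 * Λ + 2)) * s + (C + z * (3 * Λ + 2)) * Z := by
          nlinarith [Nat.zero_le (z * (3 * Λ + 2) * s), Nat.zero_le (C * Z)]

end Expansion

/-! ### The choice of the block length -/

theorem upper_bound_minimal_hamming_weight
    (r : ℕ) (hr : 2 ≤ r) (b : Fin r → ℕ) (hb : ∀ j, 1 < b j)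
    (hindep : MultIndep r b)
    (D : Finset ℕ) (hD0 : 0 ∈ D) (hD1 : 1 ∈ D)
    (hall : ∀ n : ℕ, 0 < n → ∃ d : ℕ →₀ ℕ, IsMultiBaseRepr r b D n d) :
    ∃ K₁ : ℝ, 0 < K₁ ∧ ∀ n : ℕ, 2 < n →
      ∃ d : ℕ →₀ ℕ, IsMultiBaseRepr r b D n d ∧
        (d.support.card : ℝ) ≤ K₁ * Real.log n / Real.log (Real.log n) := by
  obtain ⟨z, K, hz1, H⟩ := exists_repr_card_le hr hb hindep hD0 hD1 hall
  refine ⟨K * (6 + z) + 1, by positivity, fun n hn => ?_⟩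
  set l := Real.log n with hl
  set ll := Real.log l with hll
  set lz := Real.log z with hlz
  have hn3 : (3 : ℝ) ≤ n := by exact_mod_cast hn
  have hn0 : (0 : ℝ) < n := by linarith
  have hz0 : (0 : ℝ) < z := by exact_mod_cast (by omega : 0 < z)
  have hlz0 : 0 < lz := Real.log_pos (by exact_mod_cast hz1)
  have hl1 : 1 < l := by
    rw [hl, Real.lt_log_iff_exp_lt hn0]
    linarith [Real.exp_one_lt_d9]
  have hl0 : 0 < l := by linarith
  have hll0 : 0 < ll := Real.log_pos hl1
  have hone : 1 ≤ l / ll := by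
    rw [one_le_div hll0]
    linarith [Real.log_le_sub_one_of_pos hl0]
  have hs_le : ∀ w s : ℕ, z ^ (w * s) ≤ n → (w : ℝ) * s * lz ≤ l := by
    intro w s h
    have h1 : ((z : ℝ) ^ (w * s)) ≤ n := by exact_mod_cast h
    have h2 := Real.log_le_log (by positivity) h1
    rw [Real.log_pow] at h2
    push_cast at h2
    exact h2
  have hK : (0 : ℝ) ≤ K := Nat.cast_nonneg K
  -- it suffices to bound `s + z ^ w` for one choice of `w`
  suffices hw : ∃ w : ℕ, 0 < w ∧ ∀ s : ℕ, z ^ (w * s) ≤ n →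
      (s : ℝ) + (z : ℝ) ^ w ≤ (6 + z) * (l / ll) by
    obtain ⟨w, hw0, hws⟩ := hw
    obtain ⟨d, s, hd, hsn, hcard⟩ := H n w (by omega) hw0
    refine ⟨d, hd, ?_⟩
    have h1 : (d.support.card : ℝ) ≤ K * s + K * (z : ℝ) ^ w := by exact_mod_cast hcard
    rw [mul_div_assoc]
    nlinarith [mul_le_mul_of_nonneg_left (hws s hsn) hK]
  rcases lt_or_ge ll (2 * lz) with hsmall | hbig
  -- here `n` is bounded, and any fixed `w` will do
  · refine ⟨1, one_pos, fun s hs => ?_⟩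
    have h1 := hs_le 1 s hs
    have h2 : (s : ℝ) ≤ 2 * (l / ll) := by
      rw [← mul_div_assoc, le_div_iff₀ hll0]
      push_cast at h1
      nlinarith [mul_le_mul_of_nonneg_left hsmall.le (Nat.cast_nonneg (α := ℝ) s)]
    rw [pow_one]
    nlinarith [mul_le_mul_of_nonneg_left hone hz0.le]
  · -- this `w` has order of magnitude `log log n` while `z ^ w ≤ √(log n)`
    set w := ⌊ll / (2 * lz)⌋₊ with hw
    have hquot : 1 ≤ ll / (2 * lz) := by rwa [one_le_div (by positivity)]
    have hw0 : 0 < w := Nat.floor_pos.2 hquot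
    have hw1 : (1 : ℝ) ≤ w := by exact_mod_cast hw0
    have hwle : w * (2 * lz) ≤ ll := by
      rw [← le_div_iff₀ (by positivity)]
      exact Nat.floor_le (by positivity)
    have hwge : ll ≤ w * (4 * lz) := by
      have h1 := Nat.lt_floor_add_one (ll / (2 * lz))
      rw [← hw, div_lt_iff₀ (by positivity)] at h1
      nlinarith
    refine ⟨w, hw0, fun s hs => ?_⟩
    have h1 := hs_le w s hs
    have h2 : (s : ℝ) ≤ 4 * (l / ll) := by
      rw [← mul_div_assoc, le_div_iff₀ hll0]
      nlinarith [mul_le_mul_of_nonneg_left hwge (Nat.cast_nonneg (α := ℝ) s)]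
    have hsq : Real.exp (ll / 2) * Real.exp (ll / 2) = l := by
      rw [← Real.exp_add, add_halves, hll, Real.exp_log hl0]
    have h3 : (z : ℝ) ^ w ≤ Real.exp (ll / 2) := by
      rw [← Real.log_le_iff_le_exp (by positivity), Real.log_pow]
      linarith
    have h4 : Real.exp (ll / 2) ≤ 2 * (l / ll) := by
      rw [← mul_div_assoc, le_div_iff₀ hll0]
      have := Real.add_one_le_exp (ll / 2)
      nlinarith [Real.exp_pos (ll / 2)]
    nlinarith [mul_nonneg hz0.le (zero_le_one.trans hone)]
end

section
/- Let p and q be multiplicatively independent integers, both greater than 1. There exist positive real constants C and κ with the following property: for every integer n > 1 there exist nonnegative integers ℓ and m such that n · e^{−C (log n)^{−κ}} ≤ p^ℓ q^m ≤ n. -/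
/-!
On a logarithmic scale, the theorem says that combinations `ℓ log p + m log q` with natural
coefficients come within `C x ^ (-κ)` below every `x > 0`.  By Dirichlet's theorem there are
`k, j ≤ e ^ h` such that `ε = k log p - j log q` satisfies `|ε| ≪ e ^ (-h)`.  Starting from the
largest multiple of one of the logarithms below `x` and exchanging repeatedly `j` copies of one
logarithm for `k` copies of the other, one climbs by steps of `|ε|` to within `|ε|` of `x`
(`exists_comb_of_pos`).  About `1 / |ε|` exchanges are needed, so this is possible as soon as `x` is
larger than a constant times `e ^ h / |ε|`.  With a lower bound `|ε| ≥ e ^ (-C₀ h)`, one can take `h`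
proportional to `log x`, and the error `e ^ (-h)` is then a negative power of `x`.

The lower bound (`gap_lower_bound`) is Feldman's form of Baker's theorem for two logarithms, which
is polynomial in the size of the coefficients; a bound of the form `e ^ (-C h log h)` would not be
enough.  Suppose that `log q = (b₁ / b₂) log p + δ` with `b₁, b₂ ≤ e ^ h` and `δ` extremely small.

* Siegel's lemma (`siegel_phi`) gives integers `c`, not all zero, such that the functions
  `f_{v,u}(s) = ∑ c(k,i,j) (Δ_k^{(v)}(s) / v!) (i b₂ + j b₁) ^ u (p ^ i q ^ j) ^ s` vanish at the
  integers `0 ≤ s < S` for `v, u < T`.  Here `Δ_k = feld h k` is Feldman's polynomial of degree `k`,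
  whose Taylor coefficients at integers have denominators bounded by `lcm (1, …, h) ^ v`, of size
  only `e ^ (6 h v)`.
* The functions `f_{v,u}` are extended to the complex plane in such a way that the derivative of
  `f_{v,u}` is a combination of `f_{v+1,u}` and `f_{v,u+1}`, up to an error of size `δ`.  This error
  is made to vanish to order `M` at the integers by writing
  `p ^ (i s) q ^ (j s) = exp ((log p / b₂) (i b₂ + j b₁) s + j δ σ(s))`, where `σ = stair M` is an
  entire function with `σ(s) = s` and `σ' = (1 - e^{2πiz}) ^ M`.  Vanishing of `f_{v,u}` for all
  `v, u < N + M` thus yields genuine zeros of order `M` of `f_{v,u}` for `v, u < N` (`auxFun_order`).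
* The Schwarz lemma and the integrality of the values turn zeros at `S` integers into zeros at `Q S`
  integers, for `v, u` in a shorter range (`phi_step`).
* After seven such steps `f_{0,0}` vanishes at more integers than it has coefficients.  As the
  numbers `p ^ i q ^ j` are distinct, by multiplicative independence, a zero estimate for exponential
  polynomials (`expPoly_eq_zero`) gives `c = 0`, a contradiction.
-/

/-- Integers `p, q > 1` are multiplicatively independent. -/
def MultIndepPair (p q : ℕ) : Prop :=
  ∀ α β : ℤ, (p : ℝ) ^ α * (q : ℝ) ^ β = 1 → α = 0 ∧ β = 0

/-! ### Integer-valued polynomials with small denominators -/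

/-- The binomial polynomial `X (X - 1) ⋯ (X - r + 1) / r!`. -/
noncomputable def binPoly : ℕ → Polynomial ℂ
  | 0 => 1
  | r + 1 => binPoly r * (Polynomial.C ((r + 1 : ℂ)⁻¹) * (Polynomial.X - Polynomial.C (r : ℂ)))

/-- Feldman's polynomial of degree `k`: a power of the binomial polynomial of degree `h` times the
binomial polynomial of degree `k % h`.  Keeping `h` well below `k` keeps the denominators of its
Taylor coefficients at integers as small as powers of `lcm (1, …, h)`. -/
noncomputable def feld (h k : ℕ) : Polynomial ℂ := binPoly h ^ (k / h) * binPoly (k % h)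

lemma binPoly_degree (r : ℕ) : (binPoly r).degree = r := by
  induction r with
  | zero => simp [binPoly]
  | succ r ih =>
    have : ((r : ℂ) + 1)⁻¹ ≠ 0 := inv_ne_zero (by exact_mod_cast Nat.succ_ne_zero r)
    rw [binPoly, Polynomial.degree_mul, ih, Polynomial.degree_mul, Polynomial.degree_C this,
      Polynomial.degree_X_sub_C]
    push_cast
    simp

lemma feld_degree {h : ℕ} (k : ℕ) : (feld h k).degree = k := by
  rw [feld, Polynomial.degree_mul, Polynomial.degree_pow, binPoly_degree, binPoly_degree]
  have := Nat.div_add_mod k h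
  rw [nsmul_eq_mul, ← Nat.cast_mul, ← Nat.cast_add, mul_comm, this]

/-- Pascal's rule. -/
lemma binPoly_comp_add_one (r : ℕ) :
    (binPoly (r + 1)).comp (Polynomial.X + 1) = binPoly (r + 1) + binPoly r := by
  induction r with
  | zero => simp [binPoly]
  | succ r ih =>
    have h1 : ((r : ℂ) + 1) ≠ 0 := by exact_mod_cast Nat.succ_ne_zero r
    have h2 : ((r : ℂ) + 1 + 1) ≠ 0 := by exact_mod_cast Nat.succ_ne_zero (r + 1)
    have e1 : Polynomial.C (((r : ℂ) + 1 + 1)⁻¹) * (Polynomial.C (r : ℂ) + 1 + 1) = 1 := by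
      rw [← Polynomial.C_1, ← Polynomial.C_add, ← Polynomial.C_add, ← Polynomial.C_mul,
        inv_mul_cancel₀ h2]
    have e2 : Polynomial.C (((r : ℂ) + 1)⁻¹) * (Polynomial.C (r : ℂ) + 1) = 1 := by
      rw [← Polynomial.C_1, ← Polynomial.C_add, ← Polynomial.C_mul,
        inv_mul_cancel₀ h1]
    rw [binPoly, Polynomial.mul_comp, ih]
    simp only [binPoly, Polynomial.mul_comp, Polynomial.sub_comp, Polynomial.C_comp,
      Polynomial.X_comp, Nat.cast_add, Nat.cast_one, Polynomial.C_add, Polynomial.C_1,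
      Polynomial.add_comp, Polynomial.one_comp]
    set a := Polynomial.C (((r : ℂ) + 1 + 1)⁻¹)
    set b := Polynomial.C (((r : ℂ) + 1)⁻¹)
    set c := Polynomial.C (r : ℂ)
    linear_combination (binPoly r * (b * (Polynomial.X - c))) * e1 -
      (binPoly r * a * (Polynomial.X - c)) * e2

/-- Complex polynomials with integer coefficients. -/
noncomputable abbrev intPolys : Subring (Polynomial ℂ) :=
  (Polynomial.mapRingHom (Int.castRingHom ℂ)).range

lemma C_int_mem (n : ℤ) : Polynomial.C (n : ℂ) ∈ intPolys := ⟨Polynomial.C n, by simp⟩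

lemma X_mem : (Polynomial.X : Polynomial ℂ) ∈ intPolys := ⟨Polynomial.X, by simp⟩

/-- Around `0`, the substitution `X ↦ d X` turns a binomial polynomial into a product of linear
factors, whose coefficients are integers as soon as `1, …, r + 1` divide `d`. -/
lemma binPoly_succ_comp_dX {d : ℂ} (r : ℕ) :
    (binPoly (r + 1)).comp (Polynomial.C d * Polynomial.X) =
      Polynomial.C (d / (r + 1)) * Polynomial.X *
        ∏ t ∈ Finset.range r, (Polynomial.C (d / (t + 1)) * Polynomial.X - 1) := by
  induction r with
  | zero => simp [binPoly]
  | succ r ih =>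
    have h1 : ((r : ℂ) + 1) ≠ 0 := by exact_mod_cast Nat.succ_ne_zero r
    rw [binPoly, Polynomial.mul_comp, ih, Finset.prod_range_succ]
    have e2 : Polynomial.C (((r : ℂ) + 1)⁻¹) * (Polynomial.C (r : ℂ) + 1) = 1 := by
      rw [← Polynomial.C_1, ← Polynomial.C_add, ← Polynomial.C_mul,
        inv_mul_cancel₀ h1]
    simp only [Polynomial.mul_comp, Polynomial.sub_comp, Polynomial.C_comp,
      Polynomial.X_comp, Nat.cast_add, Nat.cast_one, Polynomial.C_add, Polynomial.C_1,
      Polynomial.add_comp, Polynomial.one_comp,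
      div_eq_mul_inv, Polynomial.C_mul]
    set a := Polynomial.C (((r : ℂ) + 1 + 1)⁻¹)
    set b := Polynomial.C (((r : ℂ) + 1)⁻¹)
    set c := Polynomial.C (r : ℂ)
    set e := Polynomial.C d
    generalize (∏ x ∈ Finset.range r, (e * Polynomial.C (((x : ℂ) + 1)⁻¹) * Polynomial.X - 1)) = Z
    linear_combination (-e * Polynomial.X * Z * a) * e2

/-- Integrality around `0` propagates to all natural numbers by Pascal's rule. -/
lemma binPoly_comp_mem {h : ℕ} (s : ℕ) : ∀ {r : ℕ}, r ≤ h →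
    (binPoly r).comp (Polynomial.C (s : ℂ) +
      Polynomial.C ((Nat.lcmUpto h : ℕ) : ℂ) * Polynomial.X) ∈ intPolys := by
  induction s with
  | zero =>
    intro r hr
    have key : ∀ t : ℕ, t + 1 ≤ h →
        Polynomial.C (((Nat.lcmUpto h : ℕ) : ℂ) / ((t : ℂ) + 1)) ∈ intPolys := by
      intro t ht
      have hd : (t + 1) ∣ Nat.lcmUpto h := by
        rw [Nat.lcmUpto]
        exact Finset.dvd_lcm (f := id) (by simp; omega)
      obtain ⟨e, he⟩ := hd
      have h1 : ((t : ℂ) + 1) ≠ 0 := by exact_mod_cast Nat.succ_ne_zero t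
      rw [he]
      push_cast
      rw [mul_div_cancel_left₀ _ h1]
      exact_mod_cast C_int_mem e
    cases r with
    | zero => simp [binPoly]
    | succ r =>
      simp only [Nat.cast_zero, Polynomial.C_0, zero_add]
      rw [binPoly_succ_comp_dX]
      refine mul_mem (mul_mem (key r hr) X_mem) (prod_mem fun t ht => ?_)
      exact sub_mem (mul_mem (key t (by have := Finset.mem_range.1 ht; omega)) X_mem) (one_mem _)
  | succ s ih =>
    intro r hr
    cases r with
    | zero => simp [binPoly]
    | succ r =>
      have : (Polynomial.C ((s + 1 : ℕ) : ℂ) +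
          Polynomial.C ((Nat.lcmUpto h : ℕ) : ℂ) * Polynomial.X) =
          (Polynomial.X + 1 : Polynomial ℂ).comp (Polynomial.C (s : ℂ) +
          Polynomial.C ((Nat.lcmUpto h : ℕ) : ℂ) * Polynomial.X) := by
        simp; ring
      rw [this, ← Polynomial.comp_assoc, binPoly_comp_add_one, Polynomial.add_comp]
      exact add_mem (ih hr) (ih (by omega))

/-- The `v`-th Taylor coefficient of a Feldman polynomial at a natural number has denominator
dividing `lcm (1, …, h) ^ v`. -/
lemma feld_hasseDeriv_int {h : ℕ} (hh : 0 < h) (k v s : ℕ) : ∃ e : ℤ,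
    (e : ℂ) = ((Nat.lcmUpto h : ℕ) : ℂ) ^ v *
      (Polynomial.hasseDeriv v (feld h k)).eval (s : ℂ) := by
  have hm : (feld h k).comp (Polynomial.C (s : ℂ) +
      Polynomial.C ((Nat.lcmUpto h : ℕ) : ℂ) * Polynomial.X) ∈ intPolys := by
    rw [feld, Polynomial.mul_comp, Polynomial.pow_comp]
    exact mul_mem (pow_mem (binPoly_comp_mem s le_rfl) _)
      (binPoly_comp_mem s (Nat.mod_lt _ hh).le)
  obtain ⟨P, hP⟩ := hm
  refine ⟨P.coeff v, ?_⟩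
  have h2 : (feld h k).comp (Polynomial.C (s : ℂ) +
      Polynomial.C ((Nat.lcmUpto h : ℕ) : ℂ) * Polynomial.X) =
      (Polynomial.taylor (s : ℂ) (feld h k)).comp
        (Polynomial.C ((Nat.lcmUpto h : ℕ) : ℂ) * Polynomial.X) := by
    rw [Polynomial.taylor_apply, Polynomial.comp_assoc]
    simp [add_comm]
  rw [← Polynomial.taylor_coeff, mul_comm, ← Polynomial.comp_C_mul_X_coeff, ← h2, ← hP]
  simp

lemma binPoly_eval_norm_le {h r : ℕ} (hr : r ≤ h) {x : ℝ} {z : ℂ} (hz : ‖z‖ + h ≤ x) :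
    ‖(binPoly r).eval z‖ ≤ x ^ r / r.factorial := by
  induction r with
  | zero => simp [binPoly]
  | succ r ih =>
    have hx : 0 ≤ x := le_trans (by positivity) hz
    have h3 : ‖z - (r : ℂ)‖ ≤ x := by
      have : (r : ℝ) ≤ h := by exact_mod_cast (by omega : r ≤ h)
      calc ‖z - (r : ℂ)‖ ≤ ‖z‖ + ‖(r : ℂ)‖ := norm_sub_le _ _
        _ ≤ x := by rw [Complex.norm_natCast]; linarith
    have h4 : ‖((r : ℂ) + 1)⁻¹‖ = ((r : ℝ) + 1)⁻¹ := by
      rw [norm_inv]; congr 1; exact_mod_cast Complex.norm_natCast (r + 1)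
    rw [binPoly, Polynomial.eval_mul, Polynomial.eval_mul, Polynomial.eval_C, Polynomial.eval_sub,
      Polynomial.eval_X, Polynomial.eval_C, norm_mul, norm_mul, h4]
    calc _ ≤ x ^ r / r.factorial * (((r : ℝ) + 1)⁻¹ * x) := by
          gcongr; exact ih (by omega)
      _ = _ := by rw [Nat.factorial_succ, pow_succ]; push_cast; field_simp

lemma feld_eval_norm_le {h K k : ℕ} (hh : 0 < h) (hk : k < K) {x : ℝ} {z : ℂ} (hz : ‖z‖ + h ≤ x) :
    ‖(feld h k).eval z‖ ≤ Real.exp x * (Real.exp 1 * x / h) ^ K := by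
  have hh' : (0 : ℝ) < h := by exact_mod_cast hh
  have hx : (h : ℝ) ≤ x := le_trans (by linarith [norm_nonneg z]) hz
  have hx0 : 0 ≤ x := hh'.le.trans hx
  have h1 : x ^ h / h.factorial ≤ (Real.exp 1 * x / h) ^ h := by
    have := Real.pow_div_factorial_le_exp (h : ℝ) hh'.le h
    have e : Real.exp (h : ℝ) = Real.exp 1 ^ h := by rw [← Real.exp_nat_mul, mul_one]
    rw [e, div_le_iff₀ (by positivity)] at this
    rw [div_pow, mul_pow, div_le_div_iff₀ (by positivity) (by positivity)]
    nlinarith [pow_nonneg hx0 h]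
  have h2 : 1 ≤ Real.exp 1 * x / h := by
    rw [one_le_div hh']
    nlinarith [Real.add_one_le_exp (1 : ℝ)]
  rw [feld, Polynomial.eval_mul, Polynomial.eval_pow, norm_mul, norm_pow, mul_comm]
  gcongr
  · exact (binPoly_eval_norm_le (Nat.mod_lt _ hh).le hz).trans
      (Real.pow_div_factorial_le_exp _ hx0 _)
  · calc ‖(binPoly h).eval z‖ ^ (k / h) ≤ ((Real.exp 1 * x / h) ^ h) ^ (k / h) := by
          gcongr; exact (binPoly_eval_norm_le le_rfl hz).trans h1
      _ = (Real.exp 1 * x / h) ^ (h * (k / h)) := by rw [pow_mul]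
      _ ≤ _ := pow_le_pow_right₀ h2 ((Nat.mul_div_le k h).trans hk.le)

/-- Cauchy's estimate on the circle of radius `1` around `z`. -/
lemma hasseDeriv_eval_norm_le (P : Polynomial ℂ) (v : ℕ) {z : ℂ} {c : ℝ}
    (hc : ∀ y : ℂ, ‖y‖ ≤ ‖z‖ + 1 → ‖P.eval y‖ ≤ c) :
    ‖(Polynomial.hasseDeriv v P).eval z‖ ≤ c := by
  have h1 := Complex.norm_iteratedDeriv_le_of_forall_mem_sphere_norm_le (c := z) (R := 1) (C := c)
    (f := fun y => P.eval y) v one_pos P.differentiable.diffContOnCl (fun y hy => hc y (by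
      have : ‖y - z‖ = 1 := by simpa [dist_eq_norm] using hy
      calc ‖y‖ = ‖z + (y - z)‖ := by congr 1; ring
        _ ≤ _ := by rw [← this]; exact norm_add_le _ _))
  have h2 : iteratedDeriv v (fun y => P.eval y) z =
      (v.factorial : ℂ) * (Polynomial.hasseDeriv v P).eval z := by
    have : ∀ (v : ℕ) (P : Polynomial ℂ), iteratedDeriv v (fun y => P.eval y) =
        fun y => (Polynomial.derivative^[v] P).eval y := by
      intro v
      induction v with
      | zero => intro P; simp
      | succ v ih =>
        intro P
        rw [iteratedDeriv_succ']
        have : deriv (fun y => P.eval y) = fun y => (Polynomial.derivative P).eval y := by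
          funext y; exact P.deriv
        rw [this, ih]; rfl
    rw [this, ← Polynomial.factorial_smul_hasseDeriv]
    simp
  rw [h2, norm_mul, Complex.norm_natCast, one_pow, div_one] at h1
  exact le_of_mul_le_mul_left h1 (by positivity)

/-! ### A discrete zero estimate for exponential polynomials -/

/-- An exponential polynomial `∑ Pᵢ(s) wᵢ ^ s` with distinct nonzero `wᵢ` and `deg Pᵢ < nᵢ` which
vanishes at the integers `0, …, D - 1`, where `D ≥ ∑ nᵢ`, is zero.  This is a discrete form of
Rolle's theorem: the operator `f ↦ f (s + 1) - wᵢ f s` costs one zero and lowers `nᵢ` by one. -/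
lemma expPoly_eq_zero {ι : Type*} [Fintype ι] (w : ι → ℂ) (hw : Function.Injective w)
    (hw0 : ∀ i, w i ≠ 0) (D : ℕ) : ∀ (n : ι → ℕ), ∑ i, n i ≤ D → ∀ P : ι → Polynomial ℂ,
      (∀ i, (P i).degree < n i) → (∀ s < D, ∑ i, (P i).eval (s : ℂ) * w i ^ s = 0) →
      ∀ i, P i = 0 := by
  classical
  induction D with
  | zero =>
    intro n hn P hP _ i
    have h0 : n i = 0 := by
      have := Finset.single_le_sum (f := n) (fun _ _ => Nat.zero_le _) (Finset.mem_univ i)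
      omega
    have := hP i
    rw [h0] at this
    exact Polynomial.degree_eq_bot.1 (Nat.WithBot.lt_zero_iff.1 (by exact_mod_cast this))
  | succ D ih =>
    intro n hn P hP hs
    have hzero : ∀ i, n i = 0 → P i = 0 := fun i hi => by
      have := hP i
      rw [hi] at this
      exact Polynomial.degree_eq_bot.1 (Nat.WithBot.lt_zero_iff.1 (by exact_mod_cast this))
    by_cases hall : ∀ i, n i = 0
    · exact fun i => hzero i (hall i)
    push Not at hall
    obtain ⟨i₀, hi₀⟩ := hall
    set Q : ι → Polynomial ℂ := fun i =>
      Polynomial.C (w i) * Polynomial.taylor 1 (P i) - Polynomial.C (w i₀) * P i with hQ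
    have hQ0 : ∀ i, Q i = 0 := by
      refine ih (Function.update n i₀ (n i₀ - 1)) ?_ Q ?_ ?_
      · have h1 := Finset.sum_update_of_mem (Finset.mem_univ i₀) n (n i₀ - 1)
        have h2 := Finset.add_sum_erase Finset.univ n (Finset.mem_univ i₀)
        rw [h1, ← Finset.erase_eq]
        omega
      · intro i
        by_cases hi : i = i₀
        · subst hi
          rw [Function.update_self]
          by_cases hPi : P i = 0
          · simp [hQ, hPi]
          have hlt : (Polynomial.taylor 1 (P i) - P i).degree < (P i).degree := by
            have := Polynomial.degree_sub_lt_left (p := Polynomial.taylor 1 (P i)) (q := P i)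
              (Polynomial.degree_taylor _ _) (by simpa using hPi)
              (by simp)
            simpa using this
          have hQi : Q i = Polynomial.C (w i) * (Polynomial.taylor 1 (P i) - P i) := by
            simp only [hQ]; ring
          rw [hQi, Polynomial.degree_C_mul (hw0 i)]
          have h3 := hP i
          rw [Polynomial.degree_eq_natDegree hPi] at hlt h3
          by_cases hd : Polynomial.taylor 1 (P i) - P i = 0
          · rw [hd]; simp
          rw [Polynomial.degree_eq_natDegree hd] at hlt ⊢
          norm_cast at hlt h3 ⊢
          omega
        · rw [Function.update_of_ne hi]
          refine lt_of_le_of_lt (Polynomial.degree_sub_le _ _) (max_lt ?_ ?_)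
          · rw [Polynomial.degree_C_mul (hw0 i), Polynomial.degree_taylor]; exact hP i
          · rw [Polynomial.degree_C_mul (hw0 i₀)]; exact hP i
      · intro s hsD
        have h1 := hs (s + 1) (by omega)
        have h2 := hs s (by omega)
        have : ∑ i, (Q i).eval (s : ℂ) * w i ^ s =
            ∑ i, (P i).eval ((s + 1 : ℕ) : ℂ) * w i ^ (s + 1) -
            w i₀ * ∑ i, (P i).eval (s : ℂ) * w i ^ s := by
          rw [Finset.mul_sum, ← Finset.sum_sub_distrib]
          refine Finset.sum_congr rfl fun i _ => ?_
          simp only [hQ, Polynomial.eval_sub, Polynomial.eval_mul, Polynomial.eval_C,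
            Polynomial.taylor_eval]
          push_cast
          ring
        rw [this, h1, h2]; simp
    have hne : ∀ i, i ≠ i₀ → P i = 0 := by
      intro i hi
      by_contra hPi
      have h1 := hQ0 i
      have h2 : (Q i).coeff (P i).natDegree = (w i - w i₀) * (P i).leadingCoeff := by
        have : (Polynomial.taylor 1 (P i)).coeff (P i).natDegree = (P i).leadingCoeff := by
          simp
        simp only [hQ, Polynomial.coeff_sub, Polynomial.coeff_C_mul, this,
          Polynomial.coeff_natDegree]
        ring
      rw [h1] at h2
      have h3 : w i - w i₀ ≠ 0 := sub_ne_zero.2 fun h => hi (hw h)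
      have h4 : (P i).leadingCoeff ≠ 0 := by simpa using hPi
      exact mul_ne_zero h3 h4 (by simpa using h2.symm)
    intro i
    by_cases hi : i = i₀
    · subst hi
      refine Polynomial.eq_zero_of_degree_lt_of_eval_finset_eq_zero
        ((Finset.range (D + 1)).image (fun s : ℕ => (s : ℂ))) ?_ ?_
      · rw [Finset.card_image_of_injective _ Nat.cast_injective, Finset.card_range]
        refine lt_of_lt_of_le (hP i) ?_
        have := Finset.single_le_sum (f := n) (fun _ _ => Nat.zero_le _) (Finset.mem_univ i)
        exact_mod_cast this.trans hn
      · intro x hx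
        obtain ⟨s, hsr, rfl⟩ := Finset.mem_image.1 hx
        have h1 := hs s (Finset.mem_range.1 hsr)
        rw [Finset.sum_eq_single i (fun j _ hj => by rw [hne j hj]; simp) (by simp)] at h1
        exact (mul_eq_zero.1 h1).resolve_right (pow_ne_zero _ (hw0 i))
    · exact hne i hi

/-! ### Entire functions with many zeros -/

lemma entire_factor (M : ℕ) (a : ℂ) : ∀ f : ℂ → ℂ, Differentiable ℂ f →
    (M : ℕ∞) ≤ analyticOrderAt f a →
    ∃ g : ℂ → ℂ, Differentiable ℂ g ∧ ∀ z, f z = (z - a) ^ M * g z := by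
  induction M with
  | zero => exact fun f hf _ => ⟨f, hf, by simp⟩
  | succ M ih =>
    intro f hf h
    have hfa : f a = 0 := by
      by_contra hne
      have := (hf.analyticAt a).analyticOrderAt_eq_zero.2 hne
      rw [this] at h
      simp at h
    have hd : Differentiable ℂ (dslope f a) := by
      rw [← differentiableOn_univ] at hf ⊢
      exact (Complex.differentiableOn_dslope Filter.univ_mem).2 hf
    have hfd : ∀ z, f z = (z - a) * dslope f a z := fun z => by
      have := sub_smul_dslope f a z
      rw [hfa, smul_eq_mul, sub_zero] at this
      exact this.symm
    have hord : analyticOrderAt f a = 1 + analyticOrderAt (dslope f a) a := by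
      have h1 : f = (fun z => z - a) * dslope f a := funext hfd
      conv_lhs => rw [h1]
      rw [analyticOrderAt_mul (by fun_prop) (hd.analyticAt a)]
      congr 1
      have h2 : AnalyticAt ℂ (fun z : ℂ => z - a) a := by fun_prop
      have := (h2.analyticOrderAt_eq_natCast (n := 1)).2
        ⟨fun _ => 1, by fun_prop, by simp, by simp⟩
      exact this
    obtain ⟨g, hg, hfg⟩ := ih (dslope f a) hd (by
      rw [hord] at h
      push_cast at h
      rw [add_comm] at h
      exact (ENat.add_le_add_iff_left (by simp)).1 h)
    exact ⟨g, hg, fun z => by rw [hfd, hfg, pow_succ]; ring⟩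

lemma entire_factor_range (M S : ℕ) (f : ℂ → ℂ) (hf : Differentiable ℂ f)
    (h : ∀ s < S, (M : ℕ∞) ≤ analyticOrderAt f (s : ℂ)) :
    ∃ g : ℂ → ℂ, Differentiable ℂ g ∧
      ∀ z, f z = (∏ s ∈ Finset.range S, (z - (s : ℂ)) ^ M) * g z := by
  induction S with
  | zero => exact ⟨f, hf, by simp⟩
  | succ S ih =>
    obtain ⟨g, hg, hfg⟩ := ih fun s hs => h s (by omega)
    have hord : (M : ℕ∞) ≤ analyticOrderAt g (S : ℂ) := by
      have h1 := h S (by omega)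
      set W : ℂ → ℂ := fun z => ∏ s ∈ Finset.range S, (z - (s : ℂ)) ^ M with hW
      have hWan : AnalyticAt ℂ W S := by
        have : Differentiable ℂ W := by fun_prop
        exact this.analyticAt _
      have hW0 : W S ≠ 0 := by
        rw [hW]
        refine Finset.prod_ne_zero_iff.2 fun s hs => pow_ne_zero _ (sub_ne_zero.2 ?_)
        have := Finset.mem_range.1 hs
        exact_mod_cast this.ne'
      have h2 : f = W * g := funext hfg
      rw [h2, analyticOrderAt_mul hWan (hg.analyticAt _),
        hWan.analyticOrderAt_eq_zero.2 hW0, zero_add] at h1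
      exact h1
    obtain ⟨k, hk, hgk⟩ := entire_factor M S g hg hord
    exact ⟨k, hk, fun z => by rw [hfg, hgk, Finset.prod_range_succ]; ring⟩

/-- The Schwarz lemma: an entire function bounded by `c` on `‖z‖ = 8 X`, with zeros of order `≥ M` at
the integers `0, …, S - 1` for some `S ≤ X`, is at most `c e^{-MS}` at real points of `[0, X]`. -/
lemma schwarz_bound {M S : ℕ} {X c : ℝ} (hSX : (S : ℝ) ≤ X) (hX : 0 < X) (f : ℂ → ℂ)
    (hf : Differentiable ℂ f) (h : ∀ s < S, (M : ℕ∞) ≤ analyticOrderAt f (s : ℂ))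
    (hc : ∀ z : ℂ, ‖z‖ = 8 * X → ‖f z‖ ≤ c) {x : ℝ} (hx0 : 0 ≤ x) (hxX : x ≤ X) :
    ‖f x‖ ≤ c * Real.exp (-(M * S)) := by
  obtain ⟨g, hg, hfg⟩ := entire_factor_range M S f hf h
  have hc0 : 0 ≤ c := (norm_nonneg _).trans (hc ((8 * X : ℝ) : ℂ) (by
    rw [Complex.norm_real, Real.norm_of_nonneg (by positivity)]))
  have hgb : ‖g x‖ ≤ c / (7 * X) ^ (M * S) := by
    refine Complex.norm_le_of_forall_mem_frontier_norm_le (U := Metric.ball 0 (8 * X))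
      Metric.isBounded_ball hg.diffContOnCl (fun z hz => ?_) ?_
    · rw [frontier_ball _ (by positivity)] at hz
      have hz' : ‖z‖ = 8 * X := by simpa using hz
      rw [le_div_iff₀ (by positivity)]
      refine le_trans ?_ (hc z hz')
      rw [hfg, norm_mul, mul_comm]
      gcongr
      rw [norm_prod]
      calc (7 * X) ^ (M * S) = ∏ s ∈ Finset.range S, (7 * X) ^ M := by simp [pow_mul]
        _ ≤ _ := by
          refine Finset.prod_le_prod (fun _ _ => by positivity) fun s hs => ?_
          rw [norm_pow]
          gcongr
          have h1 : ‖z‖ - ‖(s : ℂ)‖ ≤ ‖z - s‖ := norm_sub_norm_le _ _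
          have h2 : (s : ℝ) ≤ S := by exact_mod_cast (Finset.mem_range.1 hs).le
          rw [hz', Complex.norm_natCast] at h1
          linarith
    · rw [closure_ball _ (by positivity)]
      simp only [Metric.mem_closedBall, dist_zero_right, Complex.norm_real]
      rw [Real.norm_of_nonneg hx0]; linarith
  have hW : ‖∏ s ∈ Finset.range S, ((x : ℂ) - (s : ℂ)) ^ M‖ ≤ X ^ (M * S) := by
    rw [norm_prod]
    calc _ ≤ ∏ s ∈ Finset.range S, X ^ M := by
          refine Finset.prod_le_prod (fun _ _ => by positivity) fun s hs => ?_
          rw [norm_pow]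
          gcongr
          have h2 : (s : ℝ) ≤ S := by exact_mod_cast (Finset.mem_range.1 hs).le
          have : (x : ℂ) - s = ((x - s : ℝ) : ℂ) := by push_cast; ring
          rw [this, Complex.norm_real, Real.norm_eq_abs, abs_le]
          constructor <;> linarith [(Nat.cast_nonneg s : (0 : ℝ) ≤ s)]
      _ = _ := by simp [pow_mul]
  have h7 : Real.exp 1 ≤ 7 := by linarith [Real.exp_one_lt_d9]
  rw [hfg, norm_mul]
  calc _ ≤ X ^ (M * S) * (c / (7 * X) ^ (M * S)) := by gcongr
    _ = c / 7 ^ (M * S) := by rw [mul_pow]; field_simp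
    _ ≤ c / Real.exp 1 ^ (M * S) := by gcongr
    _ = _ := by
      rw [Real.exp_neg, ← Real.exp_nat_mul]; push_cast; rw [mul_one]; rfl

/-! ### An entire function locally constant to high order at the integers -/

/-- The difference between `z` and the truncation at order `M` of the power series, in
`1 - e^{2πiz}`, of `log (e^{2πiz}) / 2πi`.  It is entire, takes the value `s` at each natural number
`s`, and its derivative `(1 - e^{2πiz}) ^ M` vanishes there to order `M`. -/
noncomputable def stair (M : ℕ) (z : ℂ) : ℂ :=
  z + (2 * Real.pi * Complex.I)⁻¹ *
    ∑ r ∈ Finset.range M, (1 - Complex.exp (2 * Real.pi * Complex.I * z)) ^ (r + 1) / ((r : ℂ) + 1)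

lemma exp_nat_two_pi (s : ℕ) : Complex.exp (2 * Real.pi * Complex.I * s) = 1 := by
  rw [mul_comm]; exact Complex.exp_nat_mul_two_pi_mul_I s

lemma stair_nat (M s : ℕ) : stair M s = s := by
  simp [stair, exp_nat_two_pi]

lemma stair_hasDerivAt (M : ℕ) (z : ℂ) :
    HasDerivAt (stair M) ((1 - Complex.exp (2 * Real.pi * Complex.I * z)) ^ M) z := by
  have hpi : (2 * Real.pi * Complex.I : ℂ) ≠ 0 := Complex.two_pi_I_ne_zero
  set u : ℂ := 2 * Real.pi * Complex.I with hu
  have he : HasDerivAt (fun z => 1 - Complex.exp (u * z)) (-(Complex.exp (u * z) * u)) z := by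
    have := ((hasDerivAt_id z).const_mul u).cexp.const_sub 1
    simpa using this
  have hsum : HasDerivAt (fun z => ∑ r ∈ Finset.range M,
      (1 - Complex.exp (u * z)) ^ (r + 1) / ((r : ℂ) + 1))
      (∑ r ∈ Finset.range M, (1 - Complex.exp (u * z)) ^ r * (-(Complex.exp (u * z) * u))) z := by
    refine HasDerivAt.fun_sum fun r _ => ?_
    have h1 : ((r : ℂ) + 1) ≠ 0 := by exact_mod_cast Nat.succ_ne_zero r
    have := (he.pow (r + 1)).div_const ((r : ℂ) + 1)
    refine this.congr_deriv ?_
    rw [Nat.add_sub_cancel]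
    push_cast
    field_simp
  have h := (hasDerivAt_id z).add (hsum.const_mul u⁻¹)
  have hg := geom_sum_mul (1 - Complex.exp (u * z)) M
  refine h.congr_deriv ?_
  rw [← Finset.sum_mul]
  generalize ∑ r ∈ Finset.range M, (1 - Complex.exp (u * z)) ^ r = G at *
  have : u⁻¹ * (G * -(Complex.exp (u * z) * u)) = G * (1 - Complex.exp (u * z) - 1) := by
    field_simp; ring
  rw [this, hg]; ring

lemma stair_deriv_order (M s : ℕ) :
    (M : ℕ∞) ≤ analyticOrderAt (fun z => (1 - Complex.exp (2 * Real.pi * Complex.I * z)) ^ M)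
      (s : ℂ) := by
  have han : AnalyticAt ℂ (fun z => 1 - Complex.exp (2 * Real.pi * Complex.I * z)) s := by fun_prop
  have h1 : 1 ≤ analyticOrderAt (fun z => 1 - Complex.exp (2 * Real.pi * Complex.I * z)) (s : ℂ) := by
    rw [Order.one_le_iff_ne_zero, han.analyticOrderAt_ne_zero, exp_nat_two_pi, sub_self]
  have h2 := analyticOrderAt_pow han M
  have h3 : (fun z => (1 - Complex.exp (2 * Real.pi * Complex.I * z)) ^ M) =
    (fun z => 1 - Complex.exp (2 * Real.pi * Complex.I * z)) ^ M := rfl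
  rw [h3, h2, nsmul_eq_mul]
  calc (M : ℕ∞) = M * 1 := by simp
    _ ≤ _ := by gcongr

lemma stair_bound (M : ℕ) : ∃ A : ℝ, 0 < A ∧ ∀ z : ℂ, ‖stair M z‖ ≤ A * Real.exp (A * ‖z‖) := by
  refine ⟨1 + (2 * Real.pi + 1) * M + M * 2 ^ M, by positivity, fun z => ?_⟩
  have hE : ‖Complex.exp (2 * Real.pi * Complex.I * z)‖ ≤ Real.exp (2 * Real.pi * ‖z‖) := by
    refine (Complex.norm_exp_le_exp_norm _).trans (Real.exp_le_exp.2 (le_of_eq ?_))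
    simp [abs_of_pos Real.pi_pos]
  set E := Real.exp (2 * Real.pi * ‖z‖) with hEdef
  have hE1 : 1 ≤ E := Real.one_le_exp (by positivity)
  have hw : ‖1 - Complex.exp (2 * Real.pi * Complex.I * z)‖ ≤ 2 * E := by
    refine (norm_sub_le _ _).trans ?_
    rw [norm_one]; linarith
  have hterm : ∀ r ∈ Finset.range M,
      ‖(1 - Complex.exp (2 * Real.pi * Complex.I * z)) ^ (r + 1) / ((r : ℂ) + 1)‖ ≤ (2 * E) ^ M := by
    intro r hr
    have h1 : ‖(r : ℂ) + 1‖ = (r : ℝ) + 1 := by exact_mod_cast Complex.norm_natCast (r + 1)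
    rw [norm_div, norm_pow, h1]
    calc _ ≤ (2 * E) ^ (r + 1) / 1 := by
          gcongr
          linarith [(Nat.cast_nonneg r : (0 : ℝ) ≤ r)]
      _ ≤ _ := by
          rw [div_one]
          exact pow_le_pow_right₀ (by linarith) (by have := Finset.mem_range.1 hr; omega)
  have hpi : ‖(2 * Real.pi * Complex.I : ℂ)⁻¹‖ ≤ 1 := by
    rw [norm_inv]
    refine inv_le_one_of_one_le₀ ?_
    simp only [norm_mul, Complex.norm_I, mul_one, Complex.norm_ofNat, Complex.norm_real,
      Real.norm_of_nonneg Real.pi_pos.le]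
    linarith [Real.pi_gt_three]
  have hsum : ‖stair M z‖ ≤ ‖z‖ + M * (2 * E) ^ M := by
    refine (norm_add_le _ _).trans ?_
    gcongr
    rw [norm_mul]
    calc _ ≤ 1 * ∑ r ∈ Finset.range M, (2 * E) ^ M := by
          gcongr
          exact (norm_sum_le _ _).trans (Finset.sum_le_sum hterm)
      _ = _ := by simp
  set A := 1 + (2 * Real.pi + 1) * M + M * 2 ^ M with hA
  have hA1 : 1 ≤ A := by
    have : 0 ≤ (2 * Real.pi + 1) * (M : ℝ) := by positivity
    have : (0 : ℝ) ≤ M * 2 ^ M := by positivity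
    linarith
  have hz : ‖z‖ ≤ Real.exp (A * ‖z‖) := by
    have := Real.add_one_le_exp (A * ‖z‖)
    nlinarith [norm_nonneg z]
  have hEM : E ^ M ≤ Real.exp (A * ‖z‖) := by
    rw [hEdef, ← Real.exp_nat_mul, Real.exp_le_exp]
    have : (M : ℝ) * (2 * Real.pi) ≤ A := by
      have : (0 : ℝ) ≤ M * 2 ^ M := by positivity
      nlinarith [(Nat.cast_nonneg M : (0 : ℝ) ≤ M)]
    nlinarith [norm_nonneg z]
  refine hsum.trans ?_
  rw [mul_pow]
  have h0 : 0 ≤ (2 * Real.pi + 1) * (M : ℝ) * Real.exp (A * ‖z‖) := by positivity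
  have h1 : (M : ℝ) * 2 ^ M * E ^ M ≤ M * 2 ^ M * Real.exp (A * ‖z‖) := by gcongr
  rw [hA] at *
  nlinarith

/-! ### The auxiliary functions -/

/-- The family `∑ₓ Cₓ (Pₓ^{(v)}(z) / v!) νₓ ^ u exp (ω νₓ z + ηₓ σ(z))`, where `σ = stair M`. -/
noncomputable def auxFun {ι : Type*} [Fintype ι] (M : ℕ) (C : ι → ℂ) (P : ι → Polynomial ℂ)
    (ν η : ι → ℂ) (ω : ℂ) (v u : ℕ) (z : ℂ) : ℂ :=
  ∑ x, C x * (Polynomial.hasseDeriv v (P x)).eval z * ν x ^ u *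
    Complex.exp (ω * ν x * z + η x * stair M z)

lemma auxFun_hasDerivAt {ι : Type*} [Fintype ι] (M : ℕ) (C : ι → ℂ) (P : ι → Polynomial ℂ)
    (ν η : ι → ℂ) (ω : ℂ) (v u : ℕ) (z : ℂ) :
    HasDerivAt (auxFun M C P ν η ω v u)
      (((v : ℂ) + 1) * auxFun M C P ν η ω (v + 1) u z + ω * auxFun M C P ν η ω v (u + 1) z +
        (1 - Complex.exp (2 * Real.pi * Complex.I * z)) ^ M *
          auxFun M (fun x => C x * η x) P ν η ω v u z) z := by
  unfold auxFun
  rw [Finset.mul_sum, Finset.mul_sum, Finset.mul_sum, ← Finset.sum_add_distrib,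
    ← Finset.sum_add_distrib]
  refine HasDerivAt.fun_sum fun x _ => ?_
  have h1 : HasDerivAt (fun z => (Polynomial.hasseDeriv v (P x)).eval z)
      (((v : ℂ) + 1) * (Polynomial.hasseDeriv (v + 1) (P x)).eval z) z := by
    have := (Polynomial.hasseDeriv v (P x)).hasDerivAt z
    have e : Polynomial.derivative (Polynomial.hasseDeriv v (P x)) =
        (v + 1) • Polynomial.hasseDeriv (v + 1) (P x) := by
      have := Polynomial.hasseDeriv_comp (R := ℂ) 1 v
      have h := LinearMap.congr_fun this (P x)
      simp only [Polynomial.hasseDeriv_one, LinearMap.comp_apply, LinearMap.smul_apply,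
        Nat.choose_one_right, add_comm 1 v] at h
      exact h
    rw [e] at this
    simpa using this
  have h2 : HasDerivAt (fun z => Complex.exp (ω * ν x * z + η x * stair M z))
      (Complex.exp (ω * ν x * z + η x * stair M z) *
        (ω * ν x + η x * (1 - Complex.exp (2 * Real.pi * Complex.I * z)) ^ M)) z := by
    have := (((hasDerivAt_id z).const_mul (ω * ν x)).add ((stair_hasDerivAt M z).const_mul (η x))).cexp
    simpa using this
  refine (((h1.const_mul (C x)).mul_const (ν x ^ u)).mul h2).congr_deriv ?_
  ring

lemma auxFun_differentiable {ι : Type*} [Fintype ι] (M : ℕ) (C : ι → ℂ) (P : ι → Polynomial ℂ)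
    (ν η : ι → ℂ) (ω : ℂ) (v u : ℕ) : Differentiable ℂ (auxFun M C P ν η ω v u) :=
  fun z => (auxFun_hasDerivAt M C P ν η ω v u z).differentiableAt

/-- The derivative of a member of the family is, up to a term divisible by `(1 - e^{2πiz}) ^ M`, a
combination of members with larger indices, so vanishing of many members at an integer gives zeros
of high order. -/
lemma auxFun_order {ι : Type*} [Fintype ι] (M : ℕ) (C : ι → ℂ) (P : ι → Polynomial ℂ)
    (ν η : ι → ℂ) (ω : ℂ) (N s : ℕ)
    (h0 : ∀ v < N, ∀ u < N, auxFun M C P ν η ω v u s = 0) (m : ℕ) (hm : m ≤ M) :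
    ∀ v u, v + m ≤ N → u + m ≤ N → (m : ℕ∞) ≤ analyticOrderAt (auxFun M C P ν η ω v u) s := by
  induction m with
  | zero => simp
  | succ m ih =>
    intro v u hv hu
    push_cast
    rw [← analyticOrderAt_deriv_ge_iff
      ((auxFun_differentiable M C P ν η ω v u).analyticAt _) (h0 v (by omega) u (by omega))]
    have hd : deriv (auxFun M C P ν η ω v u) =
        ((fun _ => ((v : ℂ) + 1)) * auxFun M C P ν η ω (v + 1) u +
          (fun _ => ω) * auxFun M C P ν η ω v (u + 1)) +
        (fun z => (1 - Complex.exp (2 * Real.pi * Complex.I * z)) ^ M) *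
          auxFun M (fun x => C x * η x) P ν η ω v u := by
      funext z; exact (auxFun_hasDerivAt M C P ν η ω v u z).deriv
    rw [hd]
    refine le_trans (le_min (le_trans (le_min ?_ ?_) le_analyticOrderAt_add) ?_)
      le_analyticOrderAt_add
    · rw [analyticOrderAt_mul (by fun_prop) ((auxFun_differentiable _ _ _ _ _ _ _ _).analyticAt _)]
      exact (ih (by omega) (v + 1) u (by omega) (by omega)).trans le_add_self
    · rw [analyticOrderAt_mul (by fun_prop) ((auxFun_differentiable _ _ _ _ _ _ _ _).analyticAt _)]
      exact (ih (by omega) v (u + 1) (by omega) (by omega)).trans le_add_self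
    · rw [analyticOrderAt_mul (by fun_prop) ((auxFun_differentiable _ _ _ _ _ _ _ _).analyticAt _)]
      refine le_trans ?_ ((stair_deriv_order M s).trans le_self_add)
      exact_mod_cast (by omega : m ≤ M)

lemma lcmUpto_le_exp (h : ℕ) : (Nat.lcmUpto h : ℝ) ≤ Real.exp (6 * h) := by
  have h1 := Chebyshev.psi_le_const_mul_self (Nat.cast_nonneg h : (0 : ℝ) ≤ h)
  rw [Chebyshev.psi_eq_log_lcmUpto] at h1
  rw [← Real.log_le_iff_le_exp (by exact_mod_cast Nat.lcmUpto_pos h)]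
  have h4 : Real.log 4 ≤ 2 := by
    have : (4 : ℝ) = 2 ^ 2 := by norm_num
    rw [this, Real.log_pow]
    push_cast
    linarith [Real.log_two_lt_d9]
  nlinarith [(Nat.cast_nonneg h : (0 : ℝ) ≤ h)]

/-- The discrete values at integers of the auxiliary functions.  The index `x` carries the degree of
the polynomial and the exponents of `p` and `q`. -/
noncomputable def phi {K L : ℕ} (p q b₁ b₂ h : ℕ) (c : Fin K × Fin L × Fin L → ℤ)
    (v u s : ℕ) : ℂ :=
  ∑ x, (c x : ℂ) * (Polynomial.hasseDeriv v (feld h x.1)).eval (s : ℂ) *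
    ((x.2.1 * b₂ + x.2.2 * b₁ : ℕ) : ℂ) ^ u * ((p ^ (x.2.1 : ℕ) * q ^ (x.2.2 : ℕ) : ℕ) : ℂ) ^ s

/-- The error `log q - (b₁ / b₂) log p`. -/
noncomputable def gap (p q b₁ b₂ : ℕ) : ℝ := Real.log q - b₁ / b₂ * Real.log p

/-- The auxiliary function whose values at integers are given by `phi`. -/
noncomputable def bigF {K L : ℕ} (M p q b₁ b₂ h : ℕ) (c : Fin K × Fin L × Fin L → ℤ)
    (v u : ℕ) : ℂ → ℂ :=
  auxFun M (fun x => (c x : ℂ)) (fun x => feld h x.1)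
    (fun x => ((x.2.1 * b₂ + x.2.2 * b₁ : ℕ) : ℂ))
    (fun x => ((x.2.2 : ℕ) : ℂ) * (gap p q b₁ b₂ : ℝ)) ((Real.log p / b₂ : ℝ) : ℂ) v u

lemma exp_at_nat {p q b₁ b₂ : ℕ} (hp : 0 < p) (hq : 0 < q) (hb : 0 < b₂) (M i j s : ℕ) :
    Complex.exp (((Real.log p / b₂ : ℝ) : ℂ) * ((i * b₂ + j * b₁ : ℕ) : ℂ) * s +
      ((j : ℕ) : ℂ) * (gap p q b₁ b₂ : ℝ) * stair M s) = ((p ^ i * q ^ j : ℕ) : ℂ) ^ s := by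
  have hb' : (b₂ : ℝ) ≠ 0 := by exact_mod_cast hb.ne'
  have e : ((Real.log p / b₂ : ℝ) : ℂ) * ((i * b₂ + j * b₁ : ℕ) : ℂ) * s +
      ((j : ℕ) : ℂ) * (gap p q b₁ b₂ : ℝ) * stair M s =
      (((s : ℝ) * (i * Real.log p + j * Real.log q) : ℝ) : ℂ) := by
    rw [stair_nat]
    have : ((Real.log p / b₂ : ℝ)) * ((i * b₂ + j * b₁ : ℕ) : ℝ) * s +
      ((j : ℕ) : ℝ) * (gap p q b₁ b₂ : ℝ) * s = (s : ℝ) * (i * Real.log p + j * Real.log q) := by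
      rw [gap]; push_cast; field_simp; ring
    rw [← this]; push_cast; ring
  rw [e, ← Complex.ofReal_exp, Real.exp_nat_mul, Real.exp_add, Real.exp_nat_mul, Real.exp_nat_mul,
    Real.exp_log (by exact_mod_cast hp), Real.exp_log (by exact_mod_cast hq)]
  push_cast; rfl

lemma bigF_nat {K L : ℕ} {p q b₁ b₂ : ℕ} (hp : 0 < p) (hq : 0 < q) (hb : 0 < b₂) (M h : ℕ)
    (c : Fin K × Fin L × Fin L → ℤ) (v u s : ℕ) :
    bigF M p q b₁ b₂ h c v u s = phi p q b₁ b₂ h c v u s := by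
  unfold bigF auxFun phi
  refine Finset.sum_congr rfl fun x _ => ?_
  rw [exp_at_nat hp hq hb]

/-- Logarithm of the bound, on the disc of radius `R`, for the terms of the auxiliary functions. -/
noncomputable def logY (K L T h : ℕ) (ρ R : ℝ) : ℝ :=
  6 * h * T + (R + 1 + h) + K * Real.log (Real.exp 1 * (R + 1 + h) / h) +
    T * (Real.log (2 * L) + h) + (L * ρ * R + 1)

lemma term_bound {K L T M p q b₁ b₂ h : ℕ} {A R : ℝ} (hp : 1 < p) (hq : 1 < q) (hb : 0 < b₂)
    (hh : 0 < h) (hL : 0 < L) (hb1 : (b₁ : ℝ) ≤ Real.exp h) (hb2 : (b₂ : ℝ) ≤ Real.exp h)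
    (hA : 0 < A) (hst : ∀ z : ℂ, ‖stair M z‖ ≤ A * Real.exp (A * ‖z‖))
    (hgap1 : |gap p q b₁ b₂| ≤ 1) (hgap2 : L * |gap p q b₁ b₂| * (A * Real.exp (A * R)) ≤ 1)
    (hR : 0 ≤ R) {z : ℂ} (hz : ‖z‖ ≤ R) {v u k i j : ℕ} (hv : v ≤ T) (hu : u ≤ T) (hk : k < K)
    (hi : i < L) (hj : j < L) :
    ‖((Nat.lcmUpto h : ℕ) : ℂ) ^ v * (Polynomial.hasseDeriv v (feld h k)).eval z *
      ((i * b₂ + j * b₁ : ℕ) : ℂ) ^ u *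
      Complex.exp (((Real.log p / b₂ : ℝ) : ℂ) * ((i * b₂ + j * b₁ : ℕ) : ℂ) * z +
      ((j : ℕ) : ℂ) * (gap p q b₁ b₂ : ℝ) * stair M z)‖ ≤
      Real.exp (logY K L T h (Real.log p + Real.log q + 1) R) := by
  have hp0 : 0 < Real.log p := Real.log_pos (by exact_mod_cast hp)
  have hq0 : 0 < Real.log q := Real.log_pos (by exact_mod_cast hq)
  have hh' : (0 : ℝ) < h := by exact_mod_cast hh
  have hb' : (0 : ℝ) < b₂ := by exact_mod_cast hb
  have hL' : (1 : ℝ) ≤ L := by exact_mod_cast hL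
  have hi' : (i : ℝ) ≤ L := by exact_mod_cast hi.le
  have hj' : (j : ℝ) ≤ L := by exact_mod_cast hj.le
  have t1 : ‖((Nat.lcmUpto h : ℕ) : ℂ) ^ v‖ ≤ Real.exp (6 * h * T) := by
    rw [norm_pow, Complex.norm_natCast, mul_comm (6 * (h : ℝ)), Real.exp_nat_mul]
    have h1 : (1 : ℝ) ≤ (Nat.lcmUpto h : ℝ) := by exact_mod_cast Nat.lcmUpto_pos h
    calc ((Nat.lcmUpto h : ℕ) : ℝ) ^ v ≤ (Nat.lcmUpto h : ℝ) ^ T := pow_le_pow_right₀ h1 hv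
      _ ≤ _ := by gcongr; exact lcmUpto_le_exp h
  have t2 : ‖(Polynomial.hasseDeriv v (feld h k)).eval z‖ ≤ Real.exp ((R + 1 + h) +
      K * Real.log (Real.exp 1 * (R + 1 + h) / h)) := by
    have := hasseDeriv_eval_norm_le (feld h k) v (z := z)
      (c := Real.exp (R + 1 + h) * (Real.exp 1 * (R + 1 + h) / h) ^ K)
      (fun y hy => feld_eval_norm_le hh hk (by linarith))
    rw [Real.exp_add, Real.exp_nat_mul, Real.exp_log (by positivity)]
    exact this
  have t3 : ‖((i * b₂ + j * b₁ : ℕ) : ℂ) ^ u‖ ≤ Real.exp (T * (Real.log (2 * L) + h)) := by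
    rw [norm_pow, Complex.norm_natCast, Real.exp_nat_mul, Real.exp_add,
      Real.exp_log (by positivity)]
    have h1 : ((i * b₂ + j * b₁ : ℕ) : ℝ) ≤ 2 * L * Real.exp h := by
      push_cast
      calc (i : ℝ) * b₂ + j * b₁ ≤ L * Real.exp h + L * Real.exp h := by gcongr
        _ = _ := by ring
    have h2 : 1 ≤ 2 * L * Real.exp h := by nlinarith [Real.add_one_le_exp (h : ℝ)]
    calc _ ≤ (2 * L * Real.exp h) ^ u := by gcongr
      _ ≤ _ := pow_le_pow_right₀ h2 hu
  have t4 : ‖Complex.exp (((Real.log p / b₂ : ℝ) : ℂ) * ((i * b₂ + j * b₁ : ℕ) : ℂ) * z +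
      ((j : ℕ) : ℂ) * (gap p q b₁ b₂ : ℝ) * stair M z)‖ ≤
      Real.exp (L * (Real.log p + Real.log q + 1) * R + 1) := by
    refine (Complex.norm_exp_le_exp_norm _).trans (Real.exp_le_exp.2 ((norm_add_le _ _).trans ?_))
    refine add_le_add ?_ ?_
    · rw [norm_mul, norm_mul, Complex.norm_natCast, Complex.norm_real,
        Real.norm_of_nonneg (by positivity)]
      have e : Real.log p / b₂ * ((i * b₂ + j * b₁ : ℕ) : ℝ) =
          i * Real.log p + j * (Real.log q - gap p q b₁ b₂) := by
        rw [gap]; push_cast; field_simp; ring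
      have h3 : Real.log q - gap p q b₁ b₂ ≤ Real.log q + 1 := by
        linarith [(abs_le.1 hgap1).1]
      have hle : Real.log p / b₂ * ((i * b₂ + j * b₁ : ℕ) : ℝ) ≤
          L * (Real.log p + Real.log q + 1) := by
        rw [e]
        calc _ ≤ (i : ℝ) * Real.log p + j * (Real.log q + 1) := by gcongr
          _ ≤ (L : ℝ) * Real.log p + L * (Real.log q + 1) := by gcongr
          _ = _ := by ring
      exact mul_le_mul hle hz (norm_nonneg _) (by positivity)
    · rw [norm_mul, norm_mul, Complex.norm_natCast, Complex.norm_real, Real.norm_eq_abs]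
      refine le_trans ?_ hgap2
      gcongr
      exact (hst z).trans (by gcongr)
  rw [logY, norm_mul, norm_mul, norm_mul]
  calc _ ≤ Real.exp (6 * h * T) * Real.exp ((R + 1 + h) +
      K * Real.log (Real.exp 1 * (R + 1 + h) / h)) * Real.exp (T * (Real.log (2 * L) + h)) *
      Real.exp (L * (Real.log p + Real.log q + 1) * R + 1) := by gcongr
    _ = _ := by rw [← Real.exp_add, ← Real.exp_add, ← Real.exp_add]; congr 1; ring

/-- One extrapolation step: more zeros at the price of a smaller order. -/
lemma phi_step {K L T M p q b₁ b₂ h N S S' : ℕ} {A B : ℝ} (hp : 1 < p) (hq : 1 < q) (hb : 0 < b₂)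
    (hh : 0 < h) (hL : 0 < L) (hb1 : (b₁ : ℝ) ≤ Real.exp h) (hb2 : (b₂ : ℝ) ≤ Real.exp h)
    (hA : 0 < A) (hst : ∀ z : ℂ, ‖stair M z‖ ≤ A * Real.exp (A * ‖z‖))
    (hgap1 : |gap p q b₁ b₂| ≤ 1)
    (hgap2 : L * |gap p q b₁ b₂| * (A * Real.exp (A * (8 * S'))) ≤ 1)
    (hSS : S ≤ S') (hS : 0 < S) (hNT : N ≤ T) (c : Fin K × Fin L × Fin L → ℤ)
    (hc : ∀ x, |(c x : ℝ)| ≤ B)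
    (hsmall : (K * L ^ 2 : ℕ) * (B * Real.exp
      (logY K L T h (Real.log p + Real.log q + 1) (8 * S'))) * Real.exp (-(M * S)) < 1)
    (hvan : ∀ v < N + M, ∀ u < N + M, ∀ s < S, phi p q b₁ b₂ h c v u s = 0) :
    ∀ v < N, ∀ u < N, ∀ s < S', phi p q b₁ b₂ h c v u s = 0 := by
  intro v hv u hu s hs
  set d : ℂ := ((Nat.lcmUpto h : ℕ) : ℂ) with hd
  have hd0 : d ≠ 0 := by rw [hd]; exact_mod_cast (Nat.lcmUpto_pos h).ne'
  have hint : ∃ e : ℤ, (e : ℂ) = d ^ v * phi p q b₁ b₂ h c v u s := by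
    choose E hE using fun x : Fin K × Fin L × Fin L => feld_hasseDeriv_int hh (x.1 : ℕ) v s
    refine ⟨∑ x, c x * E x * ((x.2.1 * b₂ + x.2.2 * b₁ : ℕ) : ℤ) ^ u *
      ((p ^ (x.2.1 : ℕ) * q ^ (x.2.2 : ℕ) : ℕ) : ℤ) ^ s, ?_⟩
    rw [phi, Finset.mul_sum]
    push_cast
    refine Finset.sum_congr rfl fun x _ => ?_
    rw [hE x]; ring
  obtain ⟨e, he⟩ := hint
  have hFb : ∀ z : ℂ, ‖z‖ = 8 * (S' : ℝ) → ‖d ^ v * bigF M p q b₁ b₂ h c v u z‖ ≤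
      (K * L ^ 2 : ℕ) * (B * Real.exp
        (logY K L T h (Real.log p + Real.log q + 1) (8 * S'))) := by
    intro z hz
    unfold bigF auxFun
    rw [Finset.mul_sum]
    refine (norm_sum_le _ _).trans ?_
    have hcard : (Finset.univ : Finset (Fin K × Fin L × Fin L)).card = K * L ^ 2 := by
      simp [sq]
    rw [← hcard, ← nsmul_eq_mul]
    refine Finset.sum_le_card_nsmul _ _ _ fun x _ => ?_
    have tb := term_bound (K := K) (T := T) hp hq hb hh hL hb1 hb2 hA hst hgap1 hgap2
      (by positivity) hz.le (hv.le.trans hNT) (hu.le.trans hNT) x.1.2 x.2.1.2 x.2.2.2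
    have hcx := hc x
    calc _ = ‖(c x : ℂ)‖ * ‖d ^ v * (Polynomial.hasseDeriv v (feld h x.1)).eval z *
          ((x.2.1 * b₂ + x.2.2 * b₁ : ℕ) : ℂ) ^ u *
          Complex.exp (((Real.log p / b₂ : ℝ) : ℂ) * ((x.2.1 * b₂ + x.2.2 * b₁ : ℕ) : ℂ) * z +
          ((x.2.2 : ℕ) : ℂ) * (gap p q b₁ b₂ : ℝ) * stair M z)‖ := by
            rw [← norm_mul]; congr 1; ring
      _ ≤ _ := by
        have : ‖(c x : ℂ)‖ ≤ B := by rw [Complex.norm_intCast]; exact hcx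
        gcongr
        exact (norm_nonneg _).trans this
  have hord : ∀ s' < S, (M : ℕ∞) ≤ analyticOrderAt
      (fun z => d ^ v * bigF M p q b₁ b₂ h c v u z) (s' : ℂ) := by
    intro s' hs'
    have h1 := auxFun_order M (fun x => (c x : ℂ)) (fun x => feld h x.1)
      (fun x => ((x.2.1 * b₂ + x.2.2 * b₁ : ℕ) : ℂ))
      (fun x => ((x.2.2 : ℕ) : ℂ) * (gap p q b₁ b₂ : ℝ)) ((Real.log p / b₂ : ℝ) : ℂ) (N + M) s'
      (fun v hv u hu => by
        have := bigF_nat (by omega) (by omega) hb M h c v u s' (p := p) (q := q) (b₁ := b₁)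
        rw [hvan v hv u hu s' hs'] at this
        exact this) M le_rfl v u (by omega) (by omega)
    have h2 : (fun z => d ^ v * bigF M p q b₁ b₂ h c v u z) =
      (fun _ => d ^ v) * bigF M p q b₁ b₂ h c v u := rfl
    have hd : Differentiable ℂ (bigF M p q b₁ b₂ h c v u) := auxFun_differentiable _ _ _ _ _ _ _ _
    rw [h2, analyticOrderAt_mul analyticAt_const (hd.analyticAt _)]
    exact h1.trans le_add_self
  have hfin := schwarz_bound (M := M) (S := S) (X := S') (x := s) (by exact_mod_cast hSS)
    (by exact_mod_cast hS.trans_le hSS) (fun z => d ^ v * bigF M p q b₁ b₂ h c v u z)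
    ((auxFun_differentiable _ _ _ _ _ _ _ _).const_mul _) hord hFb (by positivity)
    (by exact_mod_cast hs.le)
  have hlt := hfin.trans_lt hsmall
  simp only [Complex.ofReal_natCast] at hlt
  rw [bigF_nat (by omega) (by omega) hb, ← he, Complex.norm_intCast] at hlt
  have he0 : e = 0 := by
    have : |e| < 1 := by exact_mod_cast hlt
    exact Int.abs_lt_one_iff.1 this
  rw [he0] at he
  have := he.symm
  simpa [hd0] using this

/-- Siegel's lemma provides the coefficients of the auxiliary functions. -/
lemma siegel_phi {K L T M p q b₁ b₂ h S : ℕ} {A : ℝ} (hp : 1 < p) (hq : 1 < q) (hb : 0 < b₂)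
    (hh : 0 < h) (hL : 0 < L) (hb1 : (b₁ : ℝ) ≤ Real.exp h) (hb2 : (b₂ : ℝ) ≤ Real.exp h)
    (hA : 0 < A) (hst : ∀ z : ℂ, ‖stair M z‖ ≤ A * Real.exp (A * ‖z‖))
    (hgap1 : |gap p q b₁ b₂| ≤ 1)
    (hgap2 : L * |gap p q b₁ b₂| * (A * Real.exp (A * S)) ≤ 1) (hS : 0 < S) (hT : 0 < T)
    (hK : K * L ^ 2 = 2 * (T ^ 2 * S))
    (hY : 0 ≤ logY K L T h (Real.log p + Real.log q + 1) S) :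
    ∃ c : Fin K × Fin L × Fin L → ℤ, c ≠ 0 ∧
      (∀ x, |(c x : ℝ)| ≤ (K * L ^ 2 : ℕ) *
        Real.exp (logY K L T h (Real.log p + Real.log q + 1) S)) ∧
      ∀ v < T, ∀ u < T, ∀ s < S, phi p q b₁ b₂ h c v u s = 0 := by
  choose E hE using fun (k v s : ℕ) => feld_hasseDeriv_int hh k v s
  set Mat : Matrix (Fin T × Fin T × Fin S) (Fin K × Fin L × Fin L) ℤ := fun y x =>
    E x.1 y.1 y.2.2 * ((x.2.1 * b₂ + x.2.2 * b₁ : ℕ) : ℤ) ^ (y.2.1 : ℕ) *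
      ((p ^ (x.2.1 : ℕ) * q ^ (x.2.2 : ℕ) : ℕ) : ℤ) ^ (y.2.2 : ℕ) with hMat
  have hcard : Fintype.card (Fin K × Fin L × Fin L) = K * L ^ 2 := by simp [sq]
  have hcard' : Fintype.card (Fin T × Fin T × Fin S) = T ^ 2 * S := by simp [sq, mul_assoc]
  have hpos : 0 < T ^ 2 * S := by positivity
  obtain ⟨c, hc0, hcM, hcn⟩ := Int.Matrix.exists_ne_zero_int_vec_norm_le Mat
    (by rw [hcard, hcard', hK]; omega) (by rw [hcard']; exact hpos)
  refine ⟨c, hc0, fun x => ?_, ?_⟩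
  · have hexp : ((Fintype.card (Fin T × Fin T × Fin S) : ℝ) /
        ((Fintype.card (Fin K × Fin L × Fin L) : ℝ) -
          (Fintype.card (Fin T × Fin T × Fin S) : ℝ))) = 1 := by
      rw [hcard, hcard', hK]
      have : ((T ^ 2 * S : ℕ) : ℝ) ≠ 0 := by exact_mod_cast hpos.ne'
      push_cast at this ⊢
      rw [two_mul, add_sub_cancel_right, div_self this]
    rw [hexp, Real.rpow_one, hcard] at hcn
    have h1 : |(c x : ℝ)| ≤ ‖c‖ := by
      have := norm_le_pi_norm c x
      rwa [Int.norm_eq_abs] at this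
    refine h1.trans (hcn.trans ?_)
    gcongr
    refine max_le (Real.one_le_exp hY) ?_
    rw [Matrix.norm_le_iff (Real.exp_pos _).le]
    intro y x
    have tb := term_bound (K := K) (T := T) (z := ((y.2.2 : ℕ) : ℂ)) hp hq hb hh hL hb1 hb2 hA hst
      hgap1 hgap2 (by positivity)
      (by rw [Complex.norm_natCast]; exact_mod_cast y.2.2.2.le)
      y.1.2.le y.2.1.2.le x.1.2 x.2.1.2 x.2.2.2
    rw [exp_at_nat (by omega) (by omega) hb, ← hE] at tb
    rw [Int.norm_eq_abs, ← Complex.norm_intCast]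
    simpa [hMat] using tb
  · intro v hv u hu s hs
    have h1 := congrFun hcM (⟨v, hv⟩, ⟨u, hu⟩, ⟨s, hs⟩)
    simp only [Matrix.mulVec, dotProduct, Pi.zero_apply, hMat] at h1
    have h2 := congrArg (fun e : ℤ => (e : ℂ)) h1
    simp only [Int.cast_sum, Int.cast_mul, Int.cast_pow, hE, Int.cast_natCast, Int.cast_zero] at h2
    have hd0 : ((Nat.lcmUpto h : ℕ) : ℂ) ^ v ≠ 0 :=
      pow_ne_zero _ (by exact_mod_cast (Nat.lcmUpto_pos h).ne')
    refine (mul_eq_zero.1 ?_).resolve_left hd0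
    rw [phi, Finset.mul_sum, ← h2]
    refine Finset.sum_congr rfl fun x _ => ?_
    ring

lemma pow_mul_pow_inj {p q : ℕ} (hp : 1 < p) (hq : 1 < q) (hindep : MultIndepPair p q)
    {i j i' j' : ℕ} (h : p ^ i * q ^ j = p ^ i' * q ^ j') : i = i' ∧ j = j' := by
  have hp0 : (p : ℝ) ≠ 0 := by positivity
  have hq0 : (q : ℝ) ≠ 0 := by positivity
  have h' : (p : ℝ) ^ i * (q : ℝ) ^ j = (p : ℝ) ^ i' * (q : ℝ) ^ j' := by exact_mod_cast h
  have := hindep ((i : ℤ) - i') ((j : ℤ) - j') (by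
    rw [zpow_sub₀ hp0, zpow_sub₀ hq0]
    simp only [zpow_natCast]
    field_simp
    exact h')
  omega

/-- The numbers `p ^ i q ^ j` being distinct, the zero estimate turns enough zeros into the vanishing
of all coefficients. -/
lemma phi_coeff_zero {K L p q b₁ b₂ h S : ℕ} (hp : 1 < p) (hq : 1 < q)
    (hindep : MultIndepPair p q) (c : Fin K × Fin L × Fin L → ℤ) (hS : K * L ^ 2 ≤ S)
    (hvan : ∀ s < S, phi p q b₁ b₂ h c 0 0 s = 0) : c = 0 := by
  have hw : Function.Injective (fun y : Fin L × Fin L =>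
      ((p ^ (y.1 : ℕ) * q ^ (y.2 : ℕ) : ℕ) : ℂ)) := by
    intro y y' hyy
    have h1 : p ^ (y.1 : ℕ) * q ^ (y.2 : ℕ) = p ^ (y'.1 : ℕ) * q ^ (y'.2 : ℕ) := by
      exact Nat.cast_injective (R := ℂ) hyy
    have := pow_mul_pow_inj hp hq hindep h1
    exact Prod.ext (Fin.ext this.1) (Fin.ext this.2)
  have hz := expPoly_eq_zero _ hw (fun y => by
      have hp0 : 0 < p := by omega
      have hq0 : 0 < q := by omega
      have : 0 < p ^ (y.1 : ℕ) * q ^ (y.2 : ℕ) := by positivity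
      exact_mod_cast this.ne') S (fun _ => K)
    (by simp only [Finset.sum_const, Finset.card_univ, Fintype.card_prod, Fintype.card_fin,
          smul_eq_mul]; nlinarith)
    (fun y => ∑ k : Fin K, Polynomial.C (c (k, y) : ℂ) * feld h k)
    (fun y => by
      refine lt_of_le_of_lt (Polynomial.degree_sum_le _ _)
        ((Finset.sup_lt_iff (WithBot.bot_lt_coe K)).2 fun k _ => ?_)
      refine lt_of_le_of_lt (Polynomial.degree_mul_le _ _) ?_
      rw [feld_degree]
      calc _ ≤ (0 : WithBot ℕ) + (k : ℕ) := by gcongr; exact Polynomial.degree_C_le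
        _ < _ := by rw [zero_add]; exact WithBot.coe_lt_coe.2 k.2)
    (fun s hs => by
      have := hvan s hs
      rw [phi, Fintype.sum_prod_type_right] at this
      rw [← this]
      refine Finset.sum_congr rfl fun y _ => ?_
      rw [Polynomial.eval_finsetSum, Finset.sum_mul]
      refine Finset.sum_congr rfl fun k _ => ?_
      simp)
  funext x
  obtain ⟨k, y⟩ := x
  by_contra hne
  -- The largest index `k` with a nonzero coefficient determines the degree of the polynomial.
  have hne' : ((Finset.univ : Finset (Fin K)).filter fun k => c (k, y) ≠ 0).Nonempty :=
    ⟨k, by simpa using hne⟩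
  obtain ⟨m, hm, hmax⟩ := Finset.exists_max_image _ (fun k : Fin K => (k : ℕ)) hne'
  have hcoef := congrArg (fun P => Polynomial.coeff P m) (hz y)
  simp only [Polynomial.finsetSum_coeff, Polynomial.coeff_C_mul, Polynomial.coeff_zero] at hcoef
  rw [Finset.sum_eq_single m] at hcoef
  · rcases mul_eq_zero.1 hcoef with h1 | h1
    · exact (Finset.mem_filter.1 hm).2 (by exact_mod_cast h1)
    · exact Polynomial.coeff_ne_zero_of_eq_degree (feld_degree (h := h) m) h1
  · intro k' _ hk'
    by_cases hck : c (k', y) = 0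
    · simp [hck]
    · have h1 : (k' : ℕ) ≤ m := hmax k' (by simpa using hck)
      have h2 : (k' : ℕ) ≠ m := fun h => hk' (Fin.ext h)
      rw [Polynomial.coeff_eq_zero_of_degree_lt, mul_zero]
      rw [feld_degree]
      exact_mod_cast lt_of_le_of_ne h1 h2
  · simp

/-! ### Choice of parameters and the lower bound for the linear form -/

/-- With `L = Q²`, `M = κ Q³`, `T = 8 M`, `K = 128 κ² Q² · 512 h`, the bound for the terms of the
auxiliary functions on the disc of radius `8 Q D`, multiplied by the number `K L²` of terms, is less
than the square root of the gain `exp (M D)` that the Schwarz lemma extracts from `D` zeros of order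
`M`.  (The square root leaves room for the size of the coefficients, which obeys the same bound.) -/
lemma small_bound {κ Q h : ℕ} {ρ D R : ℝ} (hρ : 1 ≤ ρ) (hκ : 144 * ρ ≤ κ) (hQ : 1 ≤ Q)
    (hQlog : 1024 * κ * Real.log (15360 * Q ^ 8) ≤ Q) (hh : 0 < h)
    (h1 : Real.log (2 * Q ^ 2) ≤ h) (h2 : Real.log (65536 * κ ^ 2 * Q ^ 6) + 1 ≤ h)
    (hD : 512 * h ≤ D) (hD2 : D ≤ Q ^ 6 * (512 * h)) (hR : 0 ≤ R) (hR2 : R ≤ 8 * (Q * D)) :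
    ((128 * κ ^ 2 * Q ^ 2 * (512 * h) * (Q ^ 2) ^ 2 : ℕ) : ℝ) *
      Real.exp (logY (128 * κ ^ 2 * Q ^ 2 * (512 * h)) (Q ^ 2) (8 * (κ * Q ^ 3)) h ρ R) <
      Real.exp (κ * Q ^ 3 * D / 2) := by
  have hh' : (1 : ℝ) ≤ h := by exact_mod_cast hh
  have hQ' : (1 : ℝ) ≤ Q := by exact_mod_cast hQ
  have hκ' : (144 : ℝ) ≤ κ := by linarith
  have hD0 : (0 : ℝ) < D := by linarith
  have hQ3 : (1 : ℝ) ≤ (Q : ℝ) ^ 3 := one_le_pow₀ hQ'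
  have hQQ3 : (Q : ℝ) ≤ (Q : ℝ) ^ 3 := le_self_pow₀ hQ' (by norm_num)
  have hDQ : D ≤ Q * D := by nlinarith
  have hRh : R + 1 + h ≤ 10 * (Q * D) := by linarith
  have e0 : ((128 * κ ^ 2 * Q ^ 2 * (512 * h) * (Q ^ 2) ^ 2 : ℕ) : ℝ) =
      Real.exp (Real.log (65536 * κ ^ 2 * Q ^ 6) + Real.log h) := by
    rw [Real.exp_add, Real.exp_log (by positivity), Real.exp_log (by positivity)]
    push_cast; ring
  rw [e0, ← Real.exp_add, Real.exp_lt_exp, logY]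
  push_cast
  set MD : ℝ := κ * Q ^ 3 * D with hMD
  have hMDh : 512 * (h : ℝ) ≤ MD := by
    have : (1 : ℝ) ≤ κ * Q ^ 3 := by nlinarith
    nlinarith
  have s1 : 6 * (h : ℝ) * (8 * (κ * Q ^ 3)) + 8 * (κ * Q ^ 3) * (Real.log (2 * Q ^ 2) + h) ≤
      MD / 8 := by
    have hM0 : (0 : ℝ) ≤ κ * Q ^ 3 := by positivity
    have := mul_le_mul_of_nonneg_left h1 hM0
    have := mul_le_mul_of_nonneg_left hD hM0
    rw [hMD]; linarith
  have s2 : (R + 1 + h) + Q ^ 2 * ρ * R ≤ MD / 8 := by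
    have hρ0 : (0 : ℝ) ≤ ρ := by linarith
    have a1 : (Q : ℝ) ^ 2 * ρ * R ≤ Q ^ 2 * ρ * (8 * (Q * D)) := by gcongr
    have a2 : 10 * (Q * D) ≤ 10 * (Q ^ 3 * ρ * D) := by
      have : (Q : ℝ) ≤ Q ^ 3 * ρ := by nlinarith
      have := mul_le_mul_of_nonneg_right this hD0.le
      linarith
    have a3 : 144 * ρ * (Q ^ 3 * D) ≤ κ * (Q ^ 3 * D) := by gcongr
    rw [hMD]; nlinarith
  have s3 : 128 * (κ : ℝ) ^ 2 * Q ^ 2 * (512 * h) * Real.log (Real.exp 1 * (R + 1 + h) / h) ≤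
      MD / 8 := by
    have b1 : Real.exp 1 * (R + 1 + h) / h ≤ 15360 * Q ^ 8 := by
      rw [div_le_iff₀ (by linarith)]
      have e1 : Real.exp 1 ≤ 3 := by linarith [Real.exp_one_lt_d9]
      calc Real.exp 1 * (R + 1 + h) ≤ 3 * (10 * (Q * (Q ^ 6 * (512 * h)))) := by
            gcongr; exact hRh.trans (by gcongr)
        _ = 15360 * Q ^ 7 * h := by ring
        _ ≤ _ := by gcongr; norm_num
    have b0 : 0 ≤ Real.log (15360 * (Q : ℝ) ^ 8) := by
      refine Real.log_nonneg ?_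
      have : (1 : ℝ) ≤ (Q : ℝ) ^ 8 := one_le_pow₀ hQ'
      linarith
    have b2 := Real.log_le_log (by positivity) b1
    calc _ ≤ 128 * (κ : ℝ) ^ 2 * Q ^ 2 * (512 * h) * Real.log (15360 * Q ^ 8) := by gcongr
      _ = κ * Q ^ 2 * (512 * h) / 8 * (1024 * κ * Real.log (15360 * Q ^ 8)) := by ring
      _ ≤ κ * Q ^ 2 * D / 8 * Q := by
        have : 0 ≤ 1024 * (κ : ℝ) * Real.log (15360 * (Q : ℝ) ^ 8) := by positivity
        gcongr
      _ = _ := by rw [hMD]; ring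
  have s4 : Real.log h ≤ h := (Real.log_le_sub_one_of_pos (by linarith)).trans (by linarith)
  linarith

lemma exists_param (κ : ℕ) :
    ∃ Q : ℕ, 1 ≤ Q ∧ 128 * κ ^ 2 ≤ Q ∧ 1024 * κ * Real.log (15360 * Q ^ 8) ≤ Q := by
  have h1 := (Real.isLittleO_log_id_atTop.def
    (c := 1 / (16384 * (κ + 1))) (by positivity)).filter_mono le_rfl
  have h2 := tendsto_natCast_atTop_atTop (R := ℝ) |>.eventually h1
  obtain ⟨Q, hQ, hQ1, hQ2, hQ3⟩ := (h2.and ((Filter.eventually_ge_atTop 1).and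
    ((Filter.eventually_ge_atTop (128 * κ ^ 2)).and
      (Filter.eventually_ge_atTop ⌈2 * (1024 * κ * Real.log 15360)⌉₊)))).exists
  refine ⟨Q, hQ1, hQ2, ?_⟩
  have hQ' : (1 : ℝ) ≤ Q := by exact_mod_cast hQ1
  have hl : 0 ≤ Real.log Q := Real.log_nonneg hQ'
  have h3 := Nat.ceil_le.1 hQ3
  rw [Real.log_mul (by norm_num) (by positivity), Real.log_pow]
  simp only [id, Real.norm_eq_abs, abs_of_nonneg hl, Nat.abs_cast] at hQ
  have h4 : 16384 * (κ + 1) * Real.log Q ≤ Q := by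
    calc _ ≤ 16384 * ((κ : ℝ) + 1) * (1 / (16384 * (κ + 1)) * Q) := by gcongr
      _ = Q := by field_simp
  push_cast
  nlinarith

/-- Lower bound for linear forms in the two logarithms `log p` and `log q`: the distance from
`log q` to `(b₁ / b₂) log p` is bounded below by a fixed power of `1 / max b₁ b₂`. -/
lemma gap_lower_bound {p q : ℕ} (hp : 1 < p) (hq : 1 < q) (hindep : MultIndepPair p q) :
    ∃ C₀ : ℝ, 0 < C₀ ∧ ∃ h₀ : ℕ, ∀ h ≥ h₀, ∀ b₁ b₂ : ℕ, 0 < b₂ → (b₁ : ℝ) ≤ Real.exp h →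
      (b₂ : ℝ) ≤ Real.exp h → Real.exp (-(C₀ * h)) < |gap p q b₁ b₂| := by
  have hp0 : 0 < Real.log p := Real.log_pos (by exact_mod_cast hp)
  have hq0 : 0 < Real.log q := Real.log_pos (by exact_mod_cast hq)
  set ρ : ℝ := Real.log p + Real.log q + 1 with hρd
  have hρ : 1 ≤ ρ := by linarith
  obtain ⟨κ, hκ⟩ := exists_nat_ge (144 * ρ)
  have hκ0 : 0 < κ := by
    have : (0 : ℝ) < κ := by linarith
    exact_mod_cast this
  obtain ⟨Q, hQ1, hQ2, hQlog⟩ := exists_param κ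
  set M := κ * Q ^ 3 with hM
  have hM0 : 0 < M := by positivity
  obtain ⟨A, hA, hst⟩ := stair_bound M
  obtain ⟨h₁, hh₁⟩ := exists_nat_ge (Real.log (2 * Q ^ 2))
  obtain ⟨h₂, hh₂⟩ := exists_nat_ge (Real.log (65536 * κ ^ 2 * Q ^ 6) + 1)
  refine ⟨(Q ^ 2 : ℕ) * A + A * (8 * (Q ^ 7 * 512)), by positivity, h₁ + h₂ + 1, ?_⟩
  intro h hh b₁ b₂ hb hb1 hb2
  by_contra! hgap
  have hh0 : 0 < h := by omega
  have hh' : (1 : ℝ) ≤ h := by exact_mod_cast hh0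
  have hH1 : Real.log (2 * Q ^ 2) ≤ h := hh₁.trans (by exact_mod_cast (by omega : h₁ ≤ h))
  have hH2 : Real.log (65536 * κ ^ 2 * Q ^ 6) + 1 ≤ h :=
    hh₂.trans (by exact_mod_cast (by omega : h₂ ≤ h))
  have hgap1 : |gap p q b₁ b₂| ≤ 1 :=
    hgap.trans (Real.exp_le_one_iff.2 (by rw [neg_nonpos]; positivity))
  -- The error is so small that the correction by `stair M` is harmless on all discs in use.
  have hgap2 : ∀ X : ℝ, X ≤ 8 * (Q ^ 7 * (512 * h)) →
      ((Q ^ 2 : ℕ) : ℝ) * |gap p q b₁ b₂| * (A * Real.exp (A * X)) ≤ 1 := by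
    intro X hX
    have hLA : ((Q ^ 2 : ℕ) : ℝ) * A ≤ Real.exp ((Q ^ 2 : ℕ) * A * h) := by
      refine le_trans ?_ (Real.add_one_le_exp _)
      have : (0 : ℝ) ≤ (Q ^ 2 : ℕ) * A := by positivity
      nlinarith
    calc _ ≤ ((Q ^ 2 : ℕ) : ℝ) * Real.exp (-(((Q ^ 2 : ℕ) * A + A * (8 * (Q ^ 7 * 512))) * h)) *
          (A * Real.exp (A * (8 * (Q ^ 7 * (512 * h))))) := by gcongr
      _ = ((Q ^ 2 : ℕ) : ℝ) * A * Real.exp (-((Q ^ 2 : ℕ) * A * h)) := by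
        rw [mul_mul_mul_comm, ← Real.exp_add]; congr 2; ring
      _ ≤ Real.exp ((Q ^ 2 : ℕ) * A * h) * Real.exp (-((Q ^ 2 : ℕ) * A * h)) := by gcongr
      _ = 1 := by rw [← Real.exp_add, add_neg_cancel, Real.exp_zero]
  set K := 128 * κ ^ 2 * Q ^ 2 * (512 * h) with hK
  have hlogY0 : 0 ≤ logY K (Q ^ 2) (8 * M) h ρ ((512 * h : ℕ) : ℝ) := by
    rw [logY]
    have l1 : 0 ≤ Real.log (Real.exp 1 * (((512 * h : ℕ) : ℝ) + 1 + h) / h) := by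
      refine Real.log_nonneg ?_
      rw [le_div_iff₀ (by linarith)]
      have e1 : 1 ≤ Real.exp 1 := Real.one_le_exp zero_le_one
      push_cast
      nlinarith
    have l2 : 0 ≤ Real.log (2 * ((Q ^ 2 : ℕ) : ℝ)) := by
      refine Real.log_nonneg ?_
      have : (1 : ℝ) ≤ (Q ^ 2 : ℕ) := by exact_mod_cast Nat.one_le_pow _ _ hQ1
      linarith
    positivity
  have hpowQ : ∀ m n : ℕ, m ≤ n → (Q : ℝ) ^ m ≤ Q ^ n := fun m n hmn =>
    pow_le_pow_right₀ (by exact_mod_cast hQ1) hmn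
  obtain ⟨c, hc0, hcB, hvan⟩ := siegel_phi (K := K) (L := Q ^ 2) (T := 8 * M) (S := 512 * h)
    hp hq hb hh0 (by positivity) hb1 hb2 hA hst hgap1
    (hgap2 _ (by
      have := hpowQ 0 7 (by norm_num)
      push_cast; nlinarith)) (by positivity) (by positivity)
    (by rw [hK, hM]; ring) hlogY0
  -- Seven extrapolation steps: each multiplies the number of zeros by `Q` and lowers the order by `M`.
  have key : ∀ r ≤ 7, ∀ v < (8 - r) * M, ∀ u < (8 - r) * M, ∀ s < Q ^ r * (512 * h),
      phi p q b₁ b₂ h c v u s = 0 := by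
    intro r
    induction r with
    | zero => simpa using hvan
    | succ r ih =>
      intro hr
      have ih' := ih (by omega)
      have hsplit : (8 - r) * M = (8 - (r + 1)) * M + M := by
        rw [← Nat.succ_mul]; congr 1; omega
      rw [hsplit] at ih'
      have hSr : ((Q ^ (r + 1) * (512 * h) : ℕ) : ℝ) = Q * (Q ^ r * (512 * h)) := by
        push_cast; ring
      have hD : (512 * h : ℝ) ≤ Q ^ r * (512 * h) := by
        have := hpowQ 0 r (Nat.zero_le _)
        rw [pow_zero] at this
        nlinarith
      have hD2 : (Q : ℝ) ^ r * (512 * h) ≤ Q ^ 6 * (512 * h) := by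
        have := hpowQ r 6 (by omega)
        gcongr
      have hDQ : (Q : ℝ) ^ r * (512 * h) ≤ Q * (Q ^ r * (512 * h)) := by
        have := hpowQ 0 1 (by omega)
        rw [pow_zero, pow_one] at this
        nlinarith
      refine phi_step (K := K) (L := Q ^ 2) (T := 8 * M) (M := M) (S := Q ^ r * (512 * h)) hp hq hb
        hh0 (by positivity) hb1 hb2 hA hst hgap1 ?_ ?_ (by positivity) ?_ c hcB ?_ ih'
      · refine hgap2 _ ?_
        have := hpowQ (r + 1) 7 (by omega)
        push_cast
        gcongr
      · exact Nat.mul_le_mul_right _ (Nat.pow_le_pow_right hQ1 (Nat.le_succ r))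
      · gcongr; omega
      · have sb1 := small_bound (R := ((512 * h : ℕ) : ℝ)) hρ hκ hQ1 hQlog hh0 hH1 hH2 hD hD2
          (by positivity) (by push_cast; nlinarith)
        have sb2 := small_bound (R := 8 * ((Q ^ (r + 1) * (512 * h) : ℕ) : ℝ)) hρ hκ hQ1 hQlog hh0
          hH1 hH2 hD hD2 (by positivity) (by rw [hSr])
        have sb := mul_lt_mul'' sb1 sb2 (by positivity) (by positivity)
        rw [← Real.exp_add, add_halves] at sb
        rw [Real.exp_neg, ← div_eq_mul_inv, div_lt_one (Real.exp_pos _)]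
        refine lt_of_eq_of_lt ?_ (sb.trans_eq ?_)
        · ring
        · congr 1; rw [hM]; push_cast; ring
  refine hc0 (phi_coeff_zero (S := Q ^ 7 * (512 * h)) hp hq hindep c ?_ fun s hs =>
    key 7 le_rfl 0 (by omega) 0 (by omega) s hs)
  calc K * (Q ^ 2) ^ 2 = (128 * κ ^ 2) * (Q ^ 6 * (512 * h)) := by rw [hK]; ring
    _ ≤ Q * (Q ^ 6 * (512 * h)) := by gcongr
    _ = _ := by ring

/-! ### Approximation by combinations of two logarithms -/

/-- If `ε = k a - j b` is positive, then exchanging `j` copies of `b` for `k` copies of `a` moves a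
combination of `a` and `b` up by `ε`; doing so repeatedly, starting from the largest multiple of `b`
not above `x`, leads to within `ε` of `x`, provided `x` is large enough. -/
lemma exists_comb_of_pos {a b x : ℝ} {k j : ℕ} (hb : 0 < b) (hε : 0 < k * a - j * b)
    (hx : j * b ^ 2 / (k * a - j * b) + b ≤ x) :
    ∃ l m : ℕ, x - (k * a - j * b) ≤ l * a + m * b ∧ l * a + m * b ≤ x := by
  set ε := k * a - j * b with hεd
  have hx0 : 0 ≤ x := le_trans (by positivity) hx
  set m₀ := ⌊x / b⌋₊ with hm
  have h1 : m₀ * b ≤ x := (le_div_iff₀ hb).1 (Nat.floor_le (by positivity))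
  have h2 : x < (m₀ + 1) * b := (div_lt_iff₀ hb).1 (Nat.lt_floor_add_one _)
  have hy : 0 ≤ (x - m₀ * b) / ε := div_nonneg (by linarith) hε.le
  set r := ⌊(x - m₀ * b) / ε⌋₊ with hr
  have h3 : r * ε ≤ x - m₀ * b := (le_div_iff₀ hε).1 (Nat.floor_le hy)
  have h4 : x - m₀ * b < (r + 1) * ε := (div_lt_iff₀ hε).1 (Nat.lt_floor_add_one _)
  have hrj : r * j ≤ m₀ := by
    have h5 : (r : ℝ) ≤ b / ε := by rw [le_div_iff₀ hε]; linarith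
    have h6 : (r : ℝ) * j * b ≤ m₀ * b := by
      calc (r : ℝ) * j * b ≤ b / ε * j * b := by gcongr
        _ = j * b ^ 2 / ε := by ring
        _ ≤ m₀ * b := by linarith
    exact_mod_cast le_of_mul_le_mul_right h6 hb
  refine ⟨r * k, m₀ - r * j, ?_, ?_⟩ <;> push_cast [Nat.cast_sub hrj] <;>
  · have : (r : ℝ) * k * a + (m₀ - r * j) * b = m₀ * b + r * ε := by rw [hεd]; ring
    linarith

/-- Dirichlet's theorem gives a small combination `k log p - j log q`, and the lower bound for
linear forms in logarithms prevents it from being too small. -/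
lemma exists_good_pair {p q : ℕ} (hp : 1 < p) (hq : 1 < q) (hindep : MultIndepPair p q) :
    ∃ C₁ : ℝ, 0 < C₁ ∧ ∃ h₁ : ℕ, ∀ h ≥ h₁, ∃ k j : ℕ, (k : ℝ) ≤ Real.exp h ∧
      (j : ℝ) ≤ Real.exp h ∧ Real.exp (-(C₁ * h)) < |k * Real.log p - j * Real.log q| ∧
      |k * Real.log p - j * Real.log q| ≤ (Real.log p + Real.log q) * Real.exp (-h) := by
  obtain ⟨C₀, hC₀, h₀, H⟩ := gap_lower_bound hp hq hindep
  have ha : 0 < Real.log p := Real.log_pos (by exact_mod_cast hp)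
  have hb : 0 < Real.log q := Real.log_pos (by exact_mod_cast hq)
  set a := Real.log p
  set b := Real.log q
  obtain ⟨h₂, hh₂⟩ := exists_nat_ge ((a + b) / a + (a / b + 1))
  refine ⟨C₀, hC₀, h₀ + h₂, fun h hh => ?_⟩
  have hexp : (a + b) / a + (a / b + 1) < Real.exp h := by
    have h1 : (h₂ : ℝ) ≤ h := by exact_mod_cast (by omega : h₂ ≤ h)
    linarith [Real.add_one_le_exp (h : ℝ)]
  have hab : 0 < a / b + 1 := by positivity
  have hab' : 0 < (a + b) / a := by positivity
  set N := ⌊Real.exp h / (a / b + 1)⌋₊ with hN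
  have hN0 : 0 < N := Nat.floor_pos.2 (by rw [le_div_iff₀ hab]; linarith)
  have hN1 : N * (a / b + 1) ≤ Real.exp h :=
    (le_div_iff₀ hab).1 (Nat.floor_le (by positivity))
  have hN2 : Real.exp h < (N + 1) * (a / b + 1) :=
    (div_lt_iff₀ hab).1 (Nat.lt_floor_add_one _)
  obtain ⟨k, hk0, hkN, hk⟩ := Real.exists_nat_abs_mul_sub_round_le (a / b) hN0
  set j := round ((k : ℝ) * (a / b)) with hj
  have hk1 : (1 : ℝ) ≤ k := by exact_mod_cast hk0
  have hkN' : (k : ℝ) ≤ N := by exact_mod_cast hkN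
  have hup : |k * a - j * b| ≤ (a + b) * Real.exp (-h) := by
    have e : k * a - j * b = (k * (a / b) - j) * b := by field_simp
    rw [e, abs_mul, abs_of_pos hb]
    calc _ ≤ 1 / ((N : ℝ) + 1) * b := by gcongr
      _ ≤ (a / b + 1) * Real.exp (-h) * b := by
        gcongr
        rw [div_le_iff₀ (by positivity), Real.exp_neg]
        field_simp
        field_simp at hN2
        linarith
      _ = _ := by field_simp
  have hsmall : (a + b) * Real.exp (-h) < a := by
    rw [Real.exp_neg, ← div_eq_mul_inv, div_lt_iff₀ (Real.exp_pos _)]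
    have : (a + b) / a < Real.exp h := by linarith
    rw [div_lt_iff₀ ha] at this
    linarith
  have hj0 : 0 < j := by
    by_contra! hneg
    have h1 : (j : ℝ) ≤ 0 := by exact_mod_cast hneg
    have h2 := (abs_le.1 hup).2
    nlinarith
  obtain ⟨j', hj'⟩ := Int.eq_ofNat_of_zero_le hj0.le
  have hcast : (j : ℝ) = (j' : ℝ) := by rw [hj']; simp
  rw [hcast] at hup hk
  have hj'0 : 0 < j' := by omega
  have hj'1 : (1 : ℝ) ≤ j' := by exact_mod_cast hj'0
  have hkexp : (k : ℝ) ≤ Real.exp h := by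
    have : 0 < a / b := by positivity
    nlinarith
  have hjexp : (j' : ℝ) ≤ Real.exp h := by
    have h1 := (abs_le.1 hk).1
    have h2 : 1 / ((N : ℝ) + 1) ≤ 1 := by
      rw [div_le_one (by positivity)]; linarith [(Nat.cast_nonneg N : (0 : ℝ) ≤ N)]
    have h3 : (k : ℝ) * (a / b) ≤ N * (a / b) := by gcongr
    have h4 : (1 : ℝ) ≤ N := by exact_mod_cast hN0
    linarith
  refine ⟨k, j', hkexp, hjexp, ?_, hup⟩
  have hlow := H h (by omega) k j' hj'0 hkexp hjexp
  have e : k * a - j' * b = -(j' * gap p q k j') := by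
    rw [gap]; field_simp; ring
  rw [e, abs_neg, abs_mul, Nat.abs_cast]
  nlinarith [abs_nonneg (gap p q k j')]

/-- The logarithmic form of the theorem.  The exponent `h` in the size `e ^ h` of the pair `(k, j)` is
chosen as large as `x` can afford, which makes the error `e ^ (-h)` a power of `1 / x`. -/
lemma exists_comb_near {p q : ℕ} (hp : 1 < p) (hq : 1 < q) (hindep : MultIndepPair p q) :
    ∃ C κ : ℝ, 0 < C ∧ 0 < κ ∧ ∀ x : ℝ, 0 < x → ∃ l m : ℕ,
      x - C * x ^ (-κ) ≤ l * Real.log p + m * Real.log q ∧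
      l * Real.log p + m * Real.log q ≤ x := by
  obtain ⟨C₁, hC₁, h₁, H⟩ := exists_good_pair hp hq hindep
  have ha : 0 < Real.log p := Real.log_pos (by exact_mod_cast hp)
  have hb : 0 < Real.log q := Real.log_pos (by exact_mod_cast hq)
  set a := Real.log p
  set b := Real.log q
  set W := (a ^ 2 + a) + (b ^ 2 + b) with hW
  have hW0 : 0 < W := by positivity
  set κ := 1 / (C₁ + 1) with hκ
  have hκ0 : 0 < κ := by positivity
  set X := W * Real.exp ((C₁ + 1) * h₁) with hX
  have hX0 : 0 < X := by positivity
  refine ⟨(a + b) * (Real.exp 1 * W ^ κ) + X ^ (1 + κ), κ, by positivity, hκ0, fun x hx => ?_⟩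
  have hxκ : 0 < x ^ (-κ) := Real.rpow_pos_of_pos hx _
  rcases lt_or_ge x X with hlt | hge
  · refine ⟨0, 0, ?_, by simpa using hx.le⟩
    have h1 : x ≤ X ^ (1 + κ) * x ^ (-κ) := by
      calc x = x ^ (1 + κ) * x ^ (-κ) := by
            rw [← Real.rpow_add hx, add_neg_cancel_right, Real.rpow_one]
        _ ≤ _ := by gcongr
    have h2 : 0 ≤ (a + b) * (Real.exp 1 * W ^ κ) * x ^ (-κ) := by positivity
    simp only [Nat.cast_zero, zero_mul, add_zero]
    linarith
  · set y := Real.log (x / W) / (C₁ + 1) with hy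
    have hy1 : (h₁ : ℝ) ≤ y := by
      rw [hy, le_div_iff₀ (by positivity), Real.le_log_iff_exp_le (by positivity),
        le_div_iff₀ hW0]
      rw [hX] at hge
      rw [mul_comm (h₁ : ℝ)]
      linarith
    set h := ⌊y⌋₊ with hh
    have hy0 : 0 ≤ y := le_trans (Nat.cast_nonneg _) hy1
    have hhy : (h : ℝ) ≤ y := Nat.floor_le hy0
    have hyh : y < h + 1 := Nat.lt_floor_add_one _
    obtain ⟨k, j, hk, hj, hlow, hup⟩ := H h (Nat.le_floor hy1)
    have hbig : W * Real.exp ((C₁ + 1) * h) ≤ x := by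
      have h1 : (C₁ + 1) * h ≤ Real.log (x / W) := by
        rw [hy, le_div_iff₀ (by positivity)] at hhy
        linarith
      have h2 := Real.exp_le_exp.2 h1
      rw [Real.exp_log (by positivity), le_div_iff₀ hW0] at h2
      linarith
    have hsmall : (a + b) * Real.exp (-h) ≤
        ((a + b) * (Real.exp 1 * W ^ κ) + X ^ (1 + κ)) * x ^ (-κ) := by
      have h1 : Real.exp (-h) ≤ Real.exp 1 * W ^ κ * x ^ (-κ) := by
        calc Real.exp (-h) ≤ Real.exp (1 - y) := Real.exp_le_exp.2 (by linarith)
          _ = Real.exp 1 * W ^ κ * x ^ (-κ) := by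
            rw [Real.rpow_def_of_pos hW0, Real.rpow_def_of_pos hx, ← Real.exp_add, ← Real.exp_add,
              hy, Real.log_div hx.ne' hW0.ne']
            congr 1
            rw [hκ]; ring
      have h2 : 0 ≤ X ^ (1 + κ) * x ^ (-κ) := by positivity
      nlinarith [mul_le_mul_of_nonneg_left h1 (add_pos ha hb).le]
    -- The cost of the exchanges is at most `W e ^ ((C₁ + 1) h)`, whichever number is traded.
    have hcost : ∀ (i : ℕ) (d e : ℝ), 0 < d → d ^ 2 + d ≤ W → (i : ℝ) ≤ Real.exp h →
        Real.exp (-(C₁ * h)) < e → i * d ^ 2 / e + d ≤ x := by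
      intro i d e hd hdW hi he
      refine le_trans ?_ hbig
      have h1 : i * d ^ 2 / e ≤ d ^ 2 * Real.exp ((C₁ + 1) * h) := by
        calc i * d ^ 2 / e ≤ Real.exp h * d ^ 2 / Real.exp (-(C₁ * h)) := by gcongr
          _ = _ := by
            rw [Real.exp_neg, div_inv_eq_mul, mul_right_comm, ← Real.exp_add, mul_comm]
            congr 2; ring
      have h2 : 1 ≤ Real.exp ((C₁ + 1) * h) := Real.one_le_exp (by positivity)
      nlinarith
    -- The sign of `k log p - j log q` decides which of the two logarithms is traded for the other.
    rcases lt_trichotomy (k * a - j * b) 0 with hneg | hzero | hpos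
    · rw [abs_of_neg hneg] at hlow hup
      have e : -(k * a - j * b) = j * b - k * a := by ring
      rw [e] at hlow hup
      obtain ⟨m, l, h1, h2⟩ := exists_comb_of_pos (a := b) (b := a) (x := x) (k := j) (j := k) ha
        (by linarith) (hcost k a _ ha (by rw [hW]; nlinarith) hk hlow)
      exact ⟨l, m, by linarith, by linarith⟩
    · rw [hzero, abs_zero] at hlow
      exact absurd hlow (Real.exp_pos _).le.not_gt
    · rw [abs_of_pos hpos] at hlow hup
      obtain ⟨l, m, h1, h2⟩ := exists_comb_of_pos hb hpos
        (hcost j b _ hb (by rw [hW]; nlinarith) hj hlow)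
      exact ⟨l, m, by linarith, h2⟩

theorem diophantine_lemma (p q : ℕ) (hp : 1 < p) (hq : 1 < q)
    (hindep : MultIndepPair p q) :
    ∃ C κ : ℝ, 0 < C ∧ 0 < κ ∧ ∀ n : ℕ, 1 < n →
      ∃ ℓ m : ℕ,
        (n : ℝ) * Real.exp (-C * (Real.log n) ^ (-κ)) ≤ (p : ℝ) ^ ℓ * (q : ℝ) ^ m ∧
        (p : ℝ) ^ ℓ * (q : ℝ) ^ m ≤ (n : ℝ) := by
  obtain ⟨C, κ, hC, hκ, H⟩ := exists_comb_near hp hq hindep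
  refine ⟨C, κ, hC, hκ, fun n hn => ?_⟩
  obtain ⟨l, m, h1, h2⟩ := H (Real.log n) (Real.log_pos (by exact_mod_cast hn))
  have hn0 : (0 : ℝ) < n := by positivity
  have e : (p : ℝ) ^ l * (q : ℝ) ^ m = Real.exp (l * Real.log p + m * Real.log q) := by
    rw [Real.exp_add, Real.exp_nat_mul, Real.exp_nat_mul, Real.exp_log (by positivity),
      Real.exp_log (by positivity)]
  refine ⟨l, m, ?_, ?_⟩
  · rw [e]
    calc _ = Real.exp (Real.log n - C * Real.log n ^ (-κ)) := by
          rw [sub_eq_add_neg, Real.exp_add, Real.exp_log hn0, neg_mul]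
      _ ≤ _ := Real.exp_le_exp.2 h1
  · rw [e]
    calc _ ≤ Real.exp (Real.log n) := Real.exp_le_exp.2 h2
      _ = n := Real.exp_log hn0
end
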